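/- arXiv:1609.07295 — 5 statements merged into one kernel-verified Lean document; each statement's English description precedes it below -/
import Mathlib

section
/- Let p(X) = X^4 + X^3 - X + 1 and p*(X) = X^4 - X^3 + X + 1 (its reciprocal). Then the set of Borwein polynomials of degree at most 4 that do not divide any Littlewood polynomial is exactly {p(X), -p(X), p*(X), -p*(X)}. In particular, every Borwein polynomial of degree at most 3 divides some Littlewood polynomial, and X^4 + X^3 - X + 1 is a smallest-degree Borwein polynomial with no Littlewood multiple. -/
open Polynomial

/-- A Borwein polynomial: all coefficients in {-1,0,1} and nonzero constant term. -/
def IsBorwein (P : Polynomial ℤ) : Prop :=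
  (∀ i, P.coeff i ∈ ({-1, 0, 1} : Set ℤ)) ∧ P.coeff 0 ≠ 0

/-- A Littlewood polynomial: all coefficients of X^0,...,X^(deg) lie in {-1,1}. -/
def IsLittlewood (L : Polynomial ℤ) : Prop :=
  ∀ i ≤ L.natDegree, L.coeff i ∈ ({-1, 1} : Set ℤ)

namespace BorweinAux

/-- Polynomial with a given list of coefficients. -/
noncomputable def ofL : List ℤ → ℤ[X]
  | [] => 0
  | a :: l => C a + X * ofL l

def addL : List ℤ → List ℤ → List ℤ
  | [], l => l
  | a :: k, [] => a :: k
  | a :: k, b :: l => (a + b) :: addL k l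

def mulL : List ℤ → List ℤ → List ℤ
  | [], _ => []
  | a :: k, l => addL (l.map (fun b => a * b)) (0 :: mulL k l)

/-- A block of `±1` followed by zeros only. -/
def chk : List ℤ → Bool
  | [] => true
  | a :: l => (decide (a = 0) && l.all (fun b => decide (b = 0))) ||
      ((decide (a = 1) || decide (a = -1)) && chk l)

lemma ofL_addL (k l : List ℤ) : ofL (addL k l) = ofL k + ofL l := by
  induction k generalizing l with
  | nil => simp [addL, ofL]
  | cons a k ih =>
    cases l with
    | nil => simp [addL, ofL]
    | cons b l => simp only [addL, ofL, ih, C_add]; ring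

lemma ofL_map (a : ℤ) (l : List ℤ) : ofL (l.map (fun b => a * b)) = C a * ofL l := by
  induction l with
  | nil => simp [ofL]
  | cons b l ih => simp only [List.map_cons, ofL, ih, C_mul]; ring

lemma ofL_mulL (k l : List ℤ) : ofL (mulL k l) = ofL k * ofL l := by
  induction k with
  | nil => simp [mulL, ofL]
  | cons a k ih => simp only [mulL, ofL, ofL_addL, ofL_map, ih, C_0]; ring

lemma ofL_zero (l : List ℤ) (h : ∀ b ∈ l, b = 0) : ofL l = 0 := by
  induction l with
  | nil => rfl
  | cons a l ih =>
    rw [ofL, ih (fun b hb => h b (List.mem_cons_of_mem _ hb)), h a List.mem_cons_self]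
    simp

lemma chk_spec (l : List ℤ) (h : chk l = true) :
    ∃ n, (∀ i < n, (ofL l).coeff i = -1 ∨ (ofL l).coeff i = 1) ∧
      ∀ i, n ≤ i → (ofL l).coeff i = 0 := by
  induction l with
  | nil => exact ⟨0, by simp, by simp [ofL]⟩
  | cons a l ih =>
    simp only [chk, Bool.or_eq_true, Bool.and_eq_true, decide_eq_true_eq, List.all_eq_true] at h
    rcases h with ⟨ha, hl⟩ | ⟨ha, hl⟩
    · refine ⟨0, by simp, ?_⟩
      rw [ofL, ofL_zero l hl, ha]
      simp
    · obtain ⟨n, h1, h2⟩ := ih hl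
      refine ⟨n + 1, ?_, ?_⟩
      · intro i hi
        cases i with
        | zero => simp [ofL]; tauto
        | succ i => simpa only [ofL, coeff_add, coeff_C_succ, coeff_X_mul, zero_add] using h1 i (by omega)
      · intro i hi
        cases i with
        | zero => omega
        | succ i => simpa only [ofL, coeff_add, coeff_C_succ, coeff_X_mul, zero_add] using h2 i (by omega)

lemma littlewood_of_chk (l : List ℤ) (h : chk l = true) (h0 : (ofL l).coeff 0 ≠ 0) :
    IsLittlewood (ofL l) := by
  obtain ⟨n, h1, h2⟩ := chk_spec l h
  intro i hi
  have hn : (ofL l).natDegree < n := by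
    by_contra hc
    have h3 := h2 _ (not_lt.mp hc)
    have h4 : ofL l = 0 := by
      rwa [coeff_natDegree, leadingCoeff_eq_zero] at h3
    rw [h4] at h0
    simp at h0
  simpa using h1 i (by omega)

/-- Cofactors giving Littlewood multiples. -/
def qs : List (List ℤ) :=
  [[1], [1, 1], [1, 0, -1, 1, 1, -1, 0, 1], [1, 1, 1, 0, -1, -1, 0, 0, 1, 0, 1], [1, 1, 0, -1],
   [1, 1, 0, -1, -1, 1, 1, 0, 0, -1], [1, -1, 0, -1, 1, -1, 1, 0, 0, -1], [1, 0, 1, 0, 0, 1, -1,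
   0, 1, -1, 1], [1, 0, 1, -1], [1, 0, 0, 1, -1, 1, -1, 0, 1, -1], [1, 1, 1, 1], [1, 1, 1], [1,
   1, 0, 1, 1, 1, 1, 0, 0, 1], [1, 0, 0, 1, 1, 1, 1, 0, 1, 1], [1, 0, 0, -1, 1, -1, 1, 0, 1,
   -1], [1, 1, 1, 0, 1, 1, 0, 0, 1, 0, 1], [1, 1, 0, 1], [1, 0, 1, 0, 0, 1, 1, 0, 1, 1, 1], [1,
   0, 1, -1, 1, -1, 0, 1], [1, 0, 1, 1], [1, 0, 1, 1, 1, 1, 0, 1], [1, 0, 0, 1, 1, 1, 1, 0, -1,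
   -1]]

def exc : List (List ℤ) :=
  [[1, -1, 0, 1, 1], [-1, 1, 0, -1, -1], [1, 1, 0, -1, 1], [-1, -1, 0, 1, -1]]

lemma table : ∀ a ∈ [(-1 : ℤ), 1], ∀ b ∈ [(-1 : ℤ), 0, 1], ∀ c ∈ [(-1 : ℤ), 0, 1],
    ∀ d ∈ [(-1 : ℤ), 0, 1], ∀ e ∈ [(-1 : ℤ), 0, 1],
    [a, b, c, d, e] ∈ exc ∨
      ∃ q ∈ qs, chk (mulL [a, b, c, d, e] q) = true ∧ (mulL [a, b, c, d, e] q).headD 0 ≠ 0 := by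
  decide +kernel

lemma coeff_zero_ofL (l : List ℤ) : (ofL l).coeff 0 = l.headD 0 := by
  cases l <;> simp [ofL]

lemma eq_ofL (P : ℤ[X]) (h : P.natDegree ≤ 4) :
    P = ofL [P.coeff 0, P.coeff 1, P.coeff 2, P.coeff 3, P.coeff 4] := by
  conv_lhs => rw [P.as_sum_range' 5 (by omega)]
  simp only [Finset.sum_range_succ, Finset.sum_range_zero, ofL, ← C_mul_X_pow_eq_monomial]
  ring

/-- Every bounded window of four consecutive cofactor coefficients. -/
def states : List (ℤ × ℤ × ℤ × ℤ) :=
  [(-2, -2, -2, -1), (-2, -2, -1, 0), (-2, -1, -1, -1), (-2, -1, -1, 1), (-2, -1, 0, 0), (-2,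
   -1, 0, 1), (-2, -1, 1, 1), (-2, -1, 2, 1), (-2, 0, 1, 2), (-2, 0, 2, 2), (-2, 1, 1, 1), (-2,
   1, 2, 1), (-2, 2, 2, 2), (-1, -2, -1, -1), (-1, -2, -1, 0), (-1, -1, -2, -1), (-1, -1, -1,
   -1), (-1, -1, -1, 0), (-1, -1, -1, 1), (-1, -1, 0, -1), (-1, -1, 0, 1), (-1, -1, 1, 0), (-1,
   -1, 1, 1), (-1, 0, -1, 0), (-1, 0, 0, 0), (-1, 0, 1, 0), (-1, 0, 1, 1), (-1, 1, 0, 1), (-1,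
   1, 1, 0), (-1, 1, 1, 1), (-1, 1, 1, 2), (-1, 1, 2, 1), (-1, 2, 1, 1), (0, -2, -2, -2), (0,
   -2, -2, -1), (0, -1, -2, -1), (0, -1, -1, -1), (0, -1, 0, 0), (0, 1, 0, 0), (0, 1, 1, 1), (0,
   1, 2, 1), (0, 2, 2, 1), (0, 2, 2, 2), (1, -2, -1, -1), (1, -1, -2, -1), (1, -1, -1, -2), (1,
   -1, -1, -1), (1, -1, -1, 0), (1, -1, 0, -1), (1, 0, -1, -1), (1, 0, -1, 0), (1, 0, 0, 0), (1,
   0, 1, 0), (1, 1, -1, -1), (1, 1, -1, 0), (1, 1, 0, -1), (1, 1, 0, 1), (1, 1, 1, -1), (1, 1,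
   1, 0), (1, 1, 1, 1), (1, 1, 2, 1), (1, 2, 1, 0), (1, 2, 1, 1), (2, -2, -2, -2), (2, -1, -2,
   -1), (2, -1, -1, -1), (2, 0, -2, -2), (2, 0, -1, -2), (2, 1, -2, -1), (2, 1, -1, -1), (2, 1,
   0, -1), (2, 1, 0, 0), (2, 1, 1, -1), (2, 1, 1, 1), (2, 2, 1, 0), (2, 2, 2, 1)]

lemma states_step : ∀ s ∈ states, ∀ e ∈ [(-1 : ℤ), 1],
    (s.1 - s.2.2.1 - s.2.2.2 + e, s.1, s.2.1, s.2.2.1) ∈ states ∨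
      2 < |s.1 - s.2.2.1 - s.2.2.2 + e| := by
  decide +kernel

lemma states_zero : ((0 : ℤ), (0 : ℤ), (0 : ℤ), (0 : ℤ)) ∉ states := by
  decide +kernel

lemma automaton (q : ℕ → ℤ) (d : ℕ) (h0 : q 0 = 0) (h1 : q 1 = 0) (h2 : q 2 = 0) (h3 : q 3 = 0)
    (hb : ∀ k, |q k| ≤ 2)
    (hs : ∀ k ≤ d, ∃ e ∈ [(-1 : ℤ), 1], q (k + 4) = q (k + 3) - q (k + 1) - q k + e) :
    ∀ k ≤ d, (q (k + 4), q (k + 3), q (k + 2), q (k + 1)) ∈ states := by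
  intro k
  induction k with
  | zero =>
    intro hk
    obtain ⟨e, he, h4⟩ := hs 0 hk
    simp only [zero_add, h0, h1, h3] at h4
    simp only [zero_add, h1, h2, h3, h4]
    simp only [List.mem_cons, List.not_mem_nil, or_false] at he
    rcases he with rfl | rfl <;> decide +kernel
  | succ k ih =>
    intro hk
    obtain ⟨e, he, h4⟩ := hs (k + 1) hk
    have h5 := states_step _ (ih (by omega)) e he
    simp only at h5
    have e1 : k + 1 + 4 = k + 5 := rfl
    have e2 : k + 1 + 3 = k + 4 := rfl
    have e3 : k + 1 + 2 = k + 3 := rfl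
    have e4 : k + 1 + 1 = k + 2 := rfl
    rw [e1, e2, e4] at h4
    rw [e1, e2, e3, e4]
    rw [← h4] at h5
    rcases h5 with h5 | h5
    · exact h5
    · exact absurd (hb (k + 5)) (not_le.mpr h5)

lemma coeff_shift_abs (F : ℤ[X]) (M : ℤ) (hM : ∀ k, |F.coeff k| ≤ M) (n k : ℕ) :
    |(X ^ n * F).coeff k| ≤ M := by
  rw [coeff_X_pow_mul']
  split_ifs
  · exact hM _
  · simpa using (abs_nonneg _).trans (hM 0)

lemma cofactor_bound (Q L : ℤ[X]) (hL : ∀ k, |L.coeff k| ≤ 1)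
    (h : (X ^ 4 + X ^ 3 - X + 1) * Q = L) (k : ℕ) : |Q.coeff k| ≤ 2 := by
  obtain ⟨m, -, hm⟩ := Finset.exists_max_image (Finset.range (Q.natDegree + 1))
    (fun i => |Q.coeff i|) ⟨0, by simp⟩
  have hM : ∀ i, |Q.coeff i| ≤ |Q.coeff m| := by
    intro i
    by_cases hi : i ≤ Q.natDegree
    · exact hm i (by simp; omega)
    · rw [coeff_eq_zero_of_natDegree_lt (by omega)]
      simp
  have key : X ^ 0 * Q + X ^ 1 * Q + 8 * (X ^ 5 * Q) + X ^ 9 * Q - X ^ 10 * Q =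
      X ^ 0 * L + 2 * (X ^ 1 * L) + 2 * (X ^ 2 * L) + X ^ 3 * L - 2 * (X ^ 4 * L)
        + 2 * (X ^ 5 * L) - X ^ 6 * L := by
    rw [← h]; ring
  have key2 := congrArg (fun F => F.coeff (m + 5)) key
  have c8 : (8 : ℤ[X]) = C 8 := rfl
  have c2 : (2 : ℤ[X]) = C 2 := rfl
  have c5 : (X ^ 5 * Q).coeff (m + 5) = Q.coeff m := coeff_X_pow_mul Q 5 m
  simp only [c8, c2, coeff_add, coeff_sub, coeff_C_mul, c5] at key2
  have q0 := coeff_shift_abs Q _ hM 0 (m + 5)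
  have q1 := coeff_shift_abs Q _ hM 1 (m + 5)
  have q9 := coeff_shift_abs Q _ hM 9 (m + 5)
  have q10 := coeff_shift_abs Q _ hM 10 (m + 5)
  have l0 := coeff_shift_abs L _ hL 0 (m + 5)
  have l1 := coeff_shift_abs L _ hL 1 (m + 5)
  have l2 := coeff_shift_abs L _ hL 2 (m + 5)
  have l3 := coeff_shift_abs L _ hL 3 (m + 5)
  have l4 := coeff_shift_abs L _ hL 4 (m + 5)
  have l5 := coeff_shift_abs L _ hL 5 (m + 5)
  have l6 := coeff_shift_abs L _ hL 6 (m + 5)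
  refine (hM k).trans ?_
  rw [abs_le] at q0 q1 q9 q10 l0 l1 l2 l3 l4 l5 l6
  clear hM hm hL key h
  rcases abs_cases (Q.coeff m) with ⟨hq, _⟩ | ⟨hq, _⟩ <;> omega

lemma natDegree_p : (X ^ 4 + X ^ 3 - X + 1 : ℤ[X]).natDegree = 4 := by
  compute_degree!

lemma no_multiple (L : ℤ[X]) (hL : IsLittlewood L) : ¬ (X ^ 4 + X ^ 3 - X + 1 : ℤ[X]) ∣ L := by
  rintro ⟨Q, rfl⟩
  have hL' : ∀ k, |((X ^ 4 + X ^ 3 - X + 1) * Q).coeff k| ≤ 1 := by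
    intro k
    by_cases hk : k ≤ ((X ^ 4 + X ^ 3 - X + 1) * Q).natDegree
    · rcases hL k hk with h | h
      · rw [h]; simp
      · rw [Set.mem_singleton_iff.mp h]; simp
    · rw [coeff_eq_zero_of_natDegree_lt (by omega)]
      simp
  have hb := cofactor_bound Q _ hL' rfl
  have hQ : Q ≠ 0 := by
    rintro rfl
    have := hL 0 (by simp)
    simp at this
  have hd : ((X ^ 4 + X ^ 3 - X + 1) * Q).natDegree = 4 + Q.natDegree := by
    rw [natDegree_mul _ hQ, natDegree_p]
    intro h
    have := natDegree_p
    rw [h] at this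
    simp at this
  have hz : ∀ j, Q.natDegree + 4 < j → (X ^ 4 * Q).coeff j = 0 := by
    intro j hj
    rw [coeff_X_pow_mul']
    split_ifs
    · exact coeff_eq_zero_of_natDegree_lt (by omega)
    · rfl
  have hlow : ∀ j < 4, (X ^ 4 * Q).coeff j = 0 := by
    intro j hj
    rw [coeff_X_pow_mul', if_neg (by omega)]
  have main := automaton (fun k => (X ^ 4 * Q).coeff k) (4 + Q.natDegree)
    (hlow 0 (by norm_num)) (hlow 1 (by norm_num)) (hlow 2 (by norm_num)) (hlow 3 (by norm_num))
    (coeff_shift_abs Q _ hb 4) ?_ (4 + Q.natDegree) le_rfl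
  · rw [hz _ (by omega), hz _ (by omega), hz _ (by omega), hz _ (by omega)] at main
    exact states_zero main
  · intro k hk
    refine ⟨((X ^ 4 + X ^ 3 - X + 1) * Q).coeff k, ?_, ?_⟩
    · simpa using hL k (by omega)
    · have e : X ^ 4 * ((X ^ 4 + X ^ 3 - X + 1) * Q) =
          X ^ 4 * (X ^ 4 * Q) + X ^ 3 * (X ^ 4 * Q) - X ^ 1 * (X ^ 4 * Q) + X ^ 4 * Q := by ring
      have e2 := congrArg (fun F => F.coeff (k + 4)) e
      have a1 : (X ^ 4 * ((X ^ 4 + X ^ 3 - X + 1) * Q)).coeff (k + 4) =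
        ((X ^ 4 + X ^ 3 - X + 1) * Q).coeff k := coeff_X_pow_mul _ 4 k
      have a2 : (X ^ 4 * (X ^ 4 * Q)).coeff (k + 4) = (X ^ 4 * Q).coeff k :=
        coeff_X_pow_mul _ 4 k
      have a3 : (X ^ 3 * (X ^ 4 * Q)).coeff (k + 4) = (X ^ 4 * Q).coeff (k + 1) :=
        coeff_X_pow_mul _ 3 (k + 1)
      have a4 : (X ^ 1 * (X ^ 4 * Q)).coeff (k + 4) = (X ^ 4 * Q).coeff (k + 3) :=
        coeff_X_pow_mul _ 1 (k + 3)
      simp only [coeff_add, coeff_sub] at e2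
      rw [a1, a2, a3, a4] at e2
      linarith

lemma littlewood_comp (L : ℤ[X]) (hL : IsLittlewood L) : IsLittlewood (L.comp (-X)) := by
  intro i hi
  have e : (-X : ℤ[X]) = C (-1) * X := by simp
  have hd : (L.comp (-X)).natDegree = L.natDegree := by
    rw [natDegree_comp]; simp
  rw [hd] at hi
  have h := hL i hi
  rw [e, comp_C_mul_X_coeff]
  rcases neg_one_pow_eq_or ℤ i with h1 | h1 <;> rw [h1] <;>
    simp only [Set.mem_insert_iff, Set.mem_singleton_iff] at h ⊢ <;> omega

lemma no_multiple_star (L : ℤ[X]) (hL : IsLittlewood L) :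
    ¬ (X ^ 4 - X ^ 3 + X + 1 : ℤ[X]) ∣ L := by
  intro h
  refine no_multiple _ (littlewood_comp L hL) ?_
  rw [dvd_comp_neg_X_iff]
  have e : (X ^ 4 + X ^ 3 - X + 1 : ℤ[X]).comp (-X) = X ^ 4 - X ^ 3 + X + 1 := by
    simp only [sub_comp, add_comp, pow_comp, X_comp, one_comp]; ring
  rwa [e]

lemma borwein_p : IsBorwein (X ^ 4 + X ^ 3 - X + 1) ∧
    (X ^ 4 + X ^ 3 - X + 1 : ℤ[X]).natDegree ≤ 4 := by
  refine ⟨⟨?_, ?_⟩, natDegree_p.le⟩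
  · intro i
    by_cases hi : i ≤ 4
    · interval_cases i <;> simp [coeff_X, coeff_one, coeff_X_pow]
    · rw [coeff_eq_zero_of_natDegree_lt (by rw [natDegree_p]; omega)]; simp
  · simp

lemma borwein_pstar : IsBorwein (X ^ 4 - X ^ 3 + X + 1) ∧
    (X ^ 4 - X ^ 3 + X + 1 : ℤ[X]).natDegree ≤ 4 := by
  have hd : (X ^ 4 - X ^ 3 + X + 1 : ℤ[X]).natDegree ≤ 4 := by compute_degree
  refine ⟨⟨?_, ?_⟩, hd⟩
  · intro i
    by_cases hi : i ≤ 4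
    · interval_cases i <;> simp [coeff_X, coeff_one, coeff_X_pow]
    · rw [coeff_eq_zero_of_natDegree_lt (by omega)]; simp
  · simp

lemma borwein_neg (P : ℤ[X]) (h : IsBorwein P ∧ P.natDegree ≤ 4) :
    IsBorwein (-P) ∧ (-P).natDegree ≤ 4 := by
  refine ⟨⟨fun i => ?_, by simpa using h.1.2⟩, by simpa using h.2⟩
  have := h.1.1 i
  simp only [coeff_neg, Set.mem_insert_iff, Set.mem_singleton_iff] at this ⊢
  omega

end BorweinAux

open BorweinAux in
/-- The set of Borwein polynomials of degree at most 4 with no Littlewood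
multiple is exactly `{p, -p, p*, -p*}` where `p = X^4 + X^3 - X + 1` and
`p* = X^4 - X^3 + X + 1` is its reciprocal. -/
theorem borwein_deg_le_four_no_littlewood_multiple :
    {P : Polynomial ℤ | IsBorwein P ∧ P.natDegree ≤ 4 ∧
        ¬ ∃ L : Polynomial ℤ, IsLittlewood L ∧ P ∣ L} =
      {X ^ 4 + X ^ 3 - X + 1, -(X ^ 4 + X ^ 3 - X + 1),
       X ^ 4 - X ^ 3 + X + 1, -(X ^ 4 - X ^ 3 + X + 1)} := by
  ext P
  simp only [Set.mem_ofPred_eq, Set.mem_insert_iff, Set.mem_singleton_iff]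
  constructor
  · rintro ⟨⟨hc, h0⟩, hd, hn⟩
    have hmem : ∀ i, P.coeff i ∈ [(-1 : ℤ), 0, 1] := fun i => by simpa using hc i
    have hmem0 : P.coeff 0 ∈ [(-1 : ℤ), 1] := by
      have := hmem 0
      simp only [List.mem_cons, List.not_mem_nil, or_false] at this ⊢
      tauto
    have hP := eq_ofL P hd
    rcases table _ hmem0 _ (hmem 1) _ (hmem 2) _ (hmem 3) _ (hmem 4) with h | ⟨q, -, h1, h2⟩
    · simp only [exc, List.mem_cons, List.not_mem_nil, or_false] at h
      rcases h with h | h | h | h <;> rw [h] at hP <;> simp only [ofL] at hP <;> rw [hP]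
      · left; simp only [map_neg, map_one, map_zero]; ring
      · right; left; simp only [map_neg, map_one, map_zero]; ring
      · right; right; left; simp only [map_neg, map_one, map_zero]; ring
      · right; right; right; simp only [map_neg, map_one, map_zero]; ring
    · refine absurd ⟨_, littlewood_of_chk _ h1 (by rwa [coeff_zero_ofL]), ?_⟩ hn
      rw [ofL_mulL, ← hP]
      exact dvd_mul_right _ _
  · rintro (rfl | rfl | rfl | rfl)
    · exact ⟨borwein_p.1, borwein_p.2, fun ⟨L, hL, h⟩ => no_multiple L hL h⟩
    · exact ⟨(borwein_neg _ borwein_p).1, (borwein_neg _ borwein_p).2,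
        fun ⟨L, hL, h⟩ => no_multiple L hL ((neg_dvd).mp h)⟩
    · exact ⟨borwein_pstar.1, borwein_pstar.2, fun ⟨L, hL, h⟩ => no_multiple_star L hL h⟩
    · exact ⟨(borwein_neg _ borwein_pstar).1, (borwein_neg _ borwein_pstar).2,
        fun ⟨L, hL, h⟩ => no_multiple_star L hL ((neg_dvd).mp h)⟩
end

section
/- The least positive integer k for which there exists a Borwein polynomial with exactly k nonzero coefficients that divides no Littlewood polynomial is k = 4. That is, every Borwein polynomial with at most 3 nonzero coefficients divides some Littlewood polynomial, and there exists a Borwein polynomial with exactly 4 nonzero coefficients (for instance X^4 + X^3 - X + 1) that divides no Littlewood polynomial. -/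
open Polynomial

/-! ### Part 1: the quadrinomial divides no Littlewood polynomial -/

/-- One step of the division automaton. -/
def escStep (e : ℤ) (s : ℤ × ℤ × ℤ × ℤ) : ℤ × ℤ × ℤ × ℤ :=
  (e + s.1 - s.2.2.1 - s.2.2.2, s.1, s.2.1, s.2.2.1)

/-- The nonzero reachable states which are not yet known to escape. -/
def escS : List (ℤ × ℤ × ℤ × ℤ) :=
  [(-2, -1, -1, -1), (-2, -1, -1, 1), (-2, -1, 0, 0), (-2, -1, 0, 1), (-1, -1, -1, -1),
   (-1, -1, -1, 0), (-1, -1, -1, 1), (-1, -1, 0, -1), (-1, -1, 0, 1), (-1, -1, 1, 0),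
   (-1, -1, 1, 1), (-1, 0, -1, 0), (-1, 0, 0, 0), (-1, 0, 1, 0), (-1, 0, 1, 1),
   (-1, 1, 0, 1), (-1, 1, 1, 0), (0, -1, -1, -1), (0, -1, 0, 0), (0, 1, 0, 0),
   (0, 1, 1, 1), (1, -1, -1, 0), (1, -1, 0, -1), (1, 0, -1, -1), (1, 0, -1, 0),
   (1, 0, 0, 0), (1, 0, 1, 0), (1, 1, -1, -1), (1, 1, -1, 0), (1, 1, 0, -1),
   (1, 1, 0, 1), (1, 1, 1, -1), (1, 1, 1, 0), (1, 1, 1, 1), (2, 1, 0, -1),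
   (2, 1, 0, 0), (2, 1, 1, -1), (2, 1, 1, 1)]

/-- Directions (Pythagorean triples) used to bound a complex norm from below. -/
def escDirs : List (ℤ × ℤ × ℤ) :=
  [(1, 0, 1), (-1, 0, 1), (0, 1, 1), (0, -1, 1),
   (3, 4, 5), (3, -4, 5), (-3, 4, 5), (-3, -4, 5),
   (4, 3, 5), (4, -3, 5), (-4, 3, 5), (-4, -3, 5)]

/-- Integer certificate that a state has large norm. -/
def EscChk (s : ℤ × ℤ × ℤ × ℤ) : Prop :=
  ∃ d ∈ escDirs, d.2.2 * 26870 + (|d.1| + |d.2.1|) * (|s.2.1| + |s.2.2.1| + |s.2.2.2|) <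
    d.1 * (10000 * s.1 + 661 * s.2.1 - 6761 * s.2.2.1 - 5661 * s.2.2.2)
      + d.2.1 * (8641 * s.2.1 + 9783 * s.2.2.1 + 4588 * s.2.2.2)

instance (s : ℤ × ℤ × ℤ × ℤ) : Decidable (EscChk s) := by
  unfold EscChk; infer_instance

set_option maxRecDepth 100000 in
lemma esc_closed : ∀ s ∈ escS, ∀ e ∈ ([1, -1] : List ℤ),
    escStep e s ∈ escS ∨ EscChk (escStep e s) := by
  decide

lemma escDirs_spec : ∀ d ∈ escDirs, d.1 ^ 2 + d.2.1 ^ 2 = d.2.2 ^ 2 ∧ 0 < d.2.2 := by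
  decide

lemma exists_q : ∃ q : ℝ, 1.8832034 ≤ q ∧ q ≤ 1.8832036 ∧
    (q ^ 2 + 1) * (q - 1) ^ 2 = q ^ 2 := by
  have hc : ContinuousOn (fun q : ℝ => (q ^ 2 + 1) * (q - 1) ^ 2 - q ^ 2)
      (Set.Icc 1.8832034 1.8832036) := by fun_prop
  have := intermediate_value_Icc (by norm_num) hc
  have h0 : (0 : ℝ) ∈ Set.Icc ((fun q : ℝ => (q ^ 2 + 1) * (q - 1) ^ 2 - q ^ 2) 1.8832034)
      ((fun q : ℝ => (q ^ 2 + 1) * (q - 1) ^ 2 - q ^ 2) 1.8832036) := by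
    constructor <;> norm_num
  obtain ⟨q, ⟨h1, h2⟩, h3⟩ := this h0
  exact ⟨q, h1, h2, by simpa [sub_eq_zero] using h3⟩

lemma exists_xy : ∃ x y : ℝ, |x - 1.066121| ≤ 1 / 10 ^ 6 ∧ |y - 0.864054| ≤ 1 / 10 ^ 6 ∧
    (1.3722 : ℝ) ^ 2 ≤ x ^ 2 + y ^ 2 ∧
    (⟨x, y⟩ : ℂ) ^ 4 - (⟨x, y⟩ : ℂ) ^ 3 + (⟨x, y⟩ : ℂ) + 1 = 0 := by
  obtain ⟨q, h1, h2, h3⟩ := exists_q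
  have hq1 : 0 < q - 1 := by linarith
  have hq0 : 0 < q := by linarith
  set x : ℝ := q / (2 * (q - 1)) with hx
  have hxq : x * (2 * (q - 1)) = q := by rw [hx]; field_simp
  have hxl : 1.066120 + 0.0000005 ≤ x := by rw [hx, le_div_iff₀ (by linarith)]; linarith
  have hxu : x ≤ 1.066122 - 0.0000005 := by rw [hx, div_le_iff₀ (by linarith)]; linarith
  have hpos : 0 ≤ q - x ^ 2 := by nlinarith
  set y : ℝ := Real.sqrt (q - x ^ 2) with hy
  have hyy : y ^ 2 = q - x ^ 2 := Real.sq_sqrt hpos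
  have hyl : 0.864053 ≤ y := by
    apply Real.le_sqrt_of_sq_le; nlinarith
  have hyu : y ≤ 0.864055 := by
    apply Real.sqrt_le_iff.mpr; constructor
    · norm_num
    · nlinarith
  refine ⟨x, y, ?_, ?_, ?_, ?_⟩
  · rw [abs_le]; constructor <;> linarith
  · rw [abs_le]; constructor <;> linarith
  · rw [hyy]; norm_num; linarith
  · have e1 : (⟨x, y⟩ : ℂ) ^ 2 - (2 * x : ℝ) * ⟨x, y⟩ + (q : ℝ) = 0 := by
      apply Complex.ext
      · simp [pow_two]; nlinarith
      · simp [pow_two]; ring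
    have hs : q * q⁻¹ = 1 := mul_inv_cancel₀ hq0.ne'
    have hx2 : 2 * x = q / (q - 1) := by rw [hx]; field_simp
    have f1 : q + q⁻¹ + (2 * x) * (1 - 2 * x) = 0 := by
      rw [hx2]; field_simp; linarith
    have f2 : (2 * x) * q⁻¹ + (1 - 2 * x) * q = -1 := by
      rw [hx2]; field_simp; ring
    have g0 : (q : ℂ) * (q⁻¹ : ℝ) = 1 := by exact_mod_cast hs
    have g1 : (q : ℂ) + (q⁻¹ : ℝ) + (2 * x : ℝ) * (1 - (2 * x : ℝ)) = 0 := by exact_mod_cast f1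
    have g2 : ((2 * x : ℝ) : ℂ) * (q⁻¹ : ℝ) + (1 - (2 * x : ℝ)) * q = -1 := by exact_mod_cast f2
    generalize (⟨x, y⟩ : ℂ) = w at *
    generalize ((2 * x : ℝ) : ℂ) = p at *
    generalize ((q⁻¹ : ℝ) : ℂ) = r at *
    linear_combination (w ^ 2 - (1 - p) * w + r) * e1 - w ^ 2 * g1 + w * g2 - g0

/-- Value of a state at an eigenvalue. -/
noncomputable def escV (w : ℂ) (s : ℤ × ℤ × ℤ × ℤ) : ℂ :=
  s.1 + s.2.1 * (w - 1) + s.2.2.1 * (w * (w - 1)) + s.2.2.2 * (w * (w * (w - 1)) + 1)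

lemma escV_step {w : ℂ} (hw : w ^ 4 - w ^ 3 + w + 1 = 0) (e : ℤ) (s : ℤ × ℤ × ℤ × ℤ) :
    escV w (escStep e s) = w * escV w s + e := by
  simp only [escV, escStep]; push_cast
  linear_combination (-(s.2.2.2 : ℂ)) * hw

lemma int_mul_lower (m : ℤ) (d : ℝ) (hd : |d| ≤ 1) : -((|m| : ℤ) : ℝ) ≤ m * d := by
  have h : |(m : ℝ) * d| ≤ |(m : ℝ)| := by
    rw [abs_mul]; exact mul_le_of_le_one_right (abs_nonneg _) hd
  have := (abs_le.mp h).1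
  push_cast; exact this

lemma mul_approx {X Y X0 Y0 e : ℝ} (hX : |X - X0| ≤ e) (hY : |Y - Y0| ≤ e)
    (hX0 : |X0| ≤ 6 / 5) (hY0 : |Y0| ≤ 6 / 5) (he : e ≤ 1 / 2) : |X * Y - X0 * Y0| ≤ 3 * e := by
  have he0 : 0 ≤ e := (abs_nonneg _).trans hX
  have h1 : |(X - X0) * (Y - Y0)| ≤ 1 / 2 * e := by
    rw [abs_mul]; nlinarith [abs_nonneg (X - X0), abs_nonneg (Y - Y0)]
  have h2 : |(X - X0) * Y0| ≤ 6 / 5 * e := by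
    rw [abs_mul]; nlinarith [abs_nonneg (X - X0), abs_nonneg Y0]
  have h3 : |X0 * (Y - Y0)| ≤ 6 / 5 * e := by
    rw [abs_mul]; nlinarith [abs_nonneg (Y - Y0), abs_nonneg X0]
  have : X * Y - X0 * Y0 = (X - X0) * (Y - Y0) + (X - X0) * Y0 + X0 * (Y - Y0) := by ring
  rw [this]
  rw [abs_le] at *
  constructor <;> linarith

lemma escChk_sound {x y : ℝ} (hx : |x - 1.066121| ≤ 1 / 10 ^ 6)
    (hy : |y - 0.864054| ≤ 1 / 10 ^ 6) (s : ℤ × ℤ × ℤ × ℤ) (h : EscChk s) :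
    2.687 < ‖escV ⟨x, y⟩ s‖ := by
  obtain ⟨s0, s1, s2, s3⟩ := s
  obtain ⟨⟨a, b, c⟩, hd, h⟩ := h
  obtain ⟨habc, hc⟩ := escDirs_spec _ hd
  simp only at h habc hc
  have hre : (escV ⟨x, y⟩ (s0, s1, s2, s3)).re = s0 + s1 * (x - 1) + s2 * (x * (x - 1) - y * y)
      + s3 * (x * (x * (x - 1) - y * y) - y * (x * y + y * (x - 1)) + 1) := by
    simp [escV]
  have him : (escV ⟨x, y⟩ (s0, s1, s2, s3)).im = s1 * y + s2 * (x * y + y * (x - 1))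
      + s3 * (x * (x * y + y * (x - 1)) + y * (x * (x - 1) - y * y)) := by
    simp [escV]
  have hx' : |(x - 1) - 0.066121| ≤ 1 / 10 ^ 6 := by
    convert hx using 2; ring
  have n2 : ∀ r : ℝ, -(6 / 5) ≤ r → r ≤ 6 / 5 → |r| ≤ 6 / 5 := fun r h1 h2 => abs_le.mpr ⟨h1, h2⟩
  have m1 := mul_approx hx hx' (n2 _ (by norm_num) (by norm_num)) (n2 _ (by norm_num) (by norm_num))
    (by norm_num)
  have m2 := mul_approx hy hy (n2 _ (by norm_num) (by norm_num)) (n2 _ (by norm_num) (by norm_num))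
    (by norm_num)
  have m3 := mul_approx hx hy (n2 _ (by norm_num) (by norm_num)) (n2 _ (by norm_num) (by norm_num))
    (by norm_num)
  have m4 := mul_approx hy hx' (n2 _ (by norm_num) (by norm_num)) (n2 _ (by norm_num) (by norm_num))
    (by norm_num)
  have k2 : |(x * (x - 1) - y * y) - (-0.676096)| ≤ 0.8 / 10 ^ 5 := by
    rw [abs_le] at *; constructor <;> linarith
  have l2 : |(x * y + y * (x - 1)) - 0.978318| ≤ 0.8 / 10 ^ 5 := by
    rw [abs_le] at *; constructor <;> linarith
  have hxw : |x - 1.066121| ≤ 0.8 / 10 ^ 5 := hx.trans (by norm_num)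
  have hyw : |y - 0.864054| ≤ 0.8 / 10 ^ 5 := hy.trans (by norm_num)
  generalize x * (x - 1) - y * y = k at *
  generalize x * y + y * (x - 1) = l at *
  have p1 := mul_approx hxw k2 (n2 _ (by norm_num) (by norm_num))
    (n2 _ (by norm_num) (by norm_num)) (by norm_num)
  have p2 := mul_approx hyw l2 (n2 _ (by norm_num) (by norm_num))
    (n2 _ (by norm_num) (by norm_num)) (by norm_num)
  have p3 := mul_approx hxw l2 (n2 _ (by norm_num) (by norm_num))
    (n2 _ (by norm_num) (by norm_num)) (by norm_num)
  have p4 := mul_approx hyw k2 (n2 _ (by norm_num) (by norm_num))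
    (n2 _ (by norm_num) (by norm_num)) (by norm_num)
  have A1 : |10000 * (x - 1) - 661| ≤ 1 := by
    clear * - hx; rw [abs_le] at *; constructor <;> linarith
  have B1 : |10000 * y - 8641| ≤ 1 := by
    clear * - hy; rw [abs_le] at *; constructor <;> linarith
  have A2 : |10000 * k + 6761| ≤ 1 := by
    clear * - k2; rw [abs_le] at *; constructor <;> linarith
  have B2 : |10000 * l - 9783| ≤ 1 := by
    clear * - l2; rw [abs_le] at *; constructor <;> linarith
  have A3 : |10000 * (x * k - y * l + 1) + 5661| ≤ 1 := by
    clear * - p1 p2; rw [abs_le] at *; constructor <;> linarith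
  have B3 : |10000 * (x * l + y * k) - 4588| ≤ 1 := by
    clear * - p3 p4; rw [abs_le] at *; constructor <;> linarith
  clear hx hy hx' m1 m2 m3 m4 k2 l2 hxw hyw p1 p2 p3 p4
  have q1 := int_mul_lower (a * s1) _ A1
  have q2 := int_mul_lower (a * s2) _ A2
  have q3 := int_mul_lower (a * s3) _ A3
  have q4 := int_mul_lower (b * s1) _ B1
  have q5 := int_mul_lower (b * s2) _ B2
  have q6 := int_mul_lower (b * s3) _ B3
  rw [abs_mul] at q1 q2 q3 q4 q5 q6
  have hR : ((c * 26870 + (|a| + |b|) * (|s1| + |s2| + |s3|) : ℤ) : ℝ) <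
    ((a * (10000 * s0 + 661 * s1 - 6761 * s2 - 5661 * s3)
      + b * (8641 * s1 + 9783 * s2 + 4588 * s3) : ℤ) : ℝ) := by exact_mod_cast h
  have key : (c : ℝ) * 2.687 < a * (escV ⟨x, y⟩ (s0, s1, s2, s3)).re
      + b * (escV ⟨x, y⟩ (s0, s1, s2, s3)).im := by
    rw [hre, him]
    generalize |a| = a', |b| = b', |s1| = s1', |s2| = s2', |s3| = s3' at *
    push_cast at *
    linarith
  have hcR : (0 : ℝ) < c := by exact_mod_cast hc
  have habcR : (a : ℝ) ^ 2 + (b : ℝ) ^ 2 = (c : ℝ) ^ 2 := by exact_mod_cast habc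
  set z := escV ⟨x, y⟩ (s0, s1, s2, s3)
  have cs : a * z.re + b * z.im ≤ c * ‖z‖ := by
    apply le_of_sq_le_sq _ (by positivity)
    rw [mul_pow, ← habcR, ← Complex.normSq_eq_norm_sq, Complex.normSq_apply]
    nlinarith [sq_nonneg (a * z.im - b * z.re)]
  have : (c : ℝ) * 2.687 < c * ‖z‖ := by linarith
  exact lt_of_mul_lt_mul_left this hcR.le

/-- The invariant of the automaton. -/
def EscInv (w : ℂ) (s : ℤ × ℤ × ℤ × ℤ) : Prop := s ∈ escS ∨ 2.687 < ‖escV w s‖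

lemma escInv_step {x y : ℝ} (hx : |x - 1.066121| ≤ 1 / 10 ^ 6)
    (hy : |y - 0.864054| ≤ 1 / 10 ^ 6) (hn : (1.3722 : ℝ) ^ 2 ≤ x ^ 2 + y ^ 2)
    (hw : (⟨x, y⟩ : ℂ) ^ 4 - (⟨x, y⟩ : ℂ) ^ 3 + (⟨x, y⟩ : ℂ) + 1 = 0)
    (e : ℤ) (he : e = -1 ∨ e = 1) (s : ℤ × ℤ × ℤ × ℤ) (h : EscInv ⟨x, y⟩ s) :
    EscInv ⟨x, y⟩ (escStep e s) := by
  rcases h with h | h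
  · rcases esc_closed s h e (by rcases he with rfl | rfl <;> simp) with h | h
    · exact Or.inl h
    · exact Or.inr (escChk_sound hx hy _ h)
  · right
    rw [escV_step hw]
    have hwn : 1.3722 ≤ ‖(⟨x, y⟩ : ℂ)‖ := by
      apply le_of_sq_le_sq _ (norm_nonneg _)
      rw [← Complex.normSq_eq_norm_sq, Complex.normSq_apply]
      simpa [pow_two] using hn
    have h1 : ‖(e : ℂ)‖ = 1 := by rcases he with rfl | rfl <;> simp
    have h2 := norm_sub_le_norm_add (⟨x, y⟩ * escV ⟨x, y⟩ s) (e : ℂ)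
    rw [norm_mul, h1] at h2
    nlinarith

lemma quad_monic : (X ^ 4 + X ^ 3 - X + 1 : ℤ[X]).Monic := by monicity!

lemma quad_natDegree : (X ^ 4 + X ^ 3 - X + 1 : ℤ[X]).natDegree = 4 := by compute_degree!

lemma quad_not_dvd (L : ℤ[X]) (hL : IsLittlewood L) : ¬ (X ^ 4 + X ^ 3 - X + 1 : ℤ[X]) ∣ L := by
  rintro ⟨Q, hQ⟩
  obtain ⟨x, y, hx, hy, hn, hw⟩ := exists_xy
  have hL0 : L ≠ 0 := by
    rintro rfl
    have := hL 0 (by simp)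
    simp at this
  have hQ0 : Q ≠ 0 := by
    rintro rfl
    simp at hQ; exact hL0 hQ
  have hdeg : L.natDegree = 4 + Q.natDegree := by
    rw [hQ, quad_monic.natDegree_mul' hQ0, quad_natDegree]
  set G : ℤ[X] := X ^ 3 * Q with hG
  have hG3 : ∀ n, G.coeff (n + 3) = Q.coeff n := fun n => by
    rw [hG, coeff_X_pow_mul]
  have hGs : ∀ n < 3, G.coeff n = 0 := fun n hn => by
    rw [hG, coeff_X_pow_mul', if_neg (by omega)]
  have hrec : ∀ n, L.coeff (n + 1) =
      G.coeff n + G.coeff (n + 1) - G.coeff (n + 3) + G.coeff (n + 4) := by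
    intro n
    have h1 : X ^ 3 * L = X ^ 4 * G + X ^ 3 * G - X * G + G := by rw [hQ, hG]; ring
    have h2 := congrArg (fun p => coeff p (n + 4)) h1
    simp only [coeff_add, coeff_sub, coeff_X_pow_mul] at h2
    have h5 : (X * G).coeff (n + 4) = G.coeff (n + 3) := coeff_X_mul G (n + 3)
    rw [h5] at h2
    exact h2
  have h0 : L.coeff 0 = G.coeff 3 := by
    rw [hG3 0, hQ, mul_coeff_zero]; simp
  have hinv : ∀ n ≤ L.natDegree, EscInv ⟨x, y⟩
      (G.coeff (n + 3), G.coeff (n + 2), G.coeff (n + 1), G.coeff n) := by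
    intro n
    induction n with
    | zero =>
      intro _
      left
      have h := hL 0 (Nat.zero_le _)
      rw [h0] at h
      simp only [zero_add, hGs 0 (by norm_num), hGs 1 (by norm_num), hGs 2 (by norm_num)]
      rcases h with h | h
      · rw [h]; decide
      · rw [Set.mem_singleton_iff.mp h]; decide
    | succ n ih =>
      intro hn'
      have h := escInv_step hx hy hn hw (L.coeff (n + 1)) (hL _ hn') _ (ih (by omega))
      convert h using 1
      simp only [escStep, hrec n]
      refine Prod.ext ?_ rfl
      simp only
      ring
  have hfin := hinv _ le_rfl
  have hz : ∀ k, 4 + Q.natDegree ≤ k → G.coeff k = 0 := by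
    intro k hk
    obtain ⟨m, rfl⟩ : ∃ m, k = m + 3 := ⟨k - 3, by omega⟩
    rw [hG3]
    exact coeff_eq_zero_of_natDegree_lt (by omega)
  rw [hdeg, hz _ (by omega), hz _ (by omega), hz _ (by omega), hz _ (by omega)] at hfin
  rcases hfin with h | h
  · revert h; decide
  · simp [escV] at h
    norm_num at h

lemma quad_support : (X ^ 4 + X ^ 3 - X + 1 : ℤ[X]).support = {0, 1, 3, 4} := by
  ext n
  simp only [mem_support_iff, coeff_add, coeff_sub, coeff_X_pow, coeff_X, coeff_one]
  simp only [Finset.mem_insert, Finset.mem_singleton]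
  split_ifs <;> omega

lemma quad_borwein : IsBorwein (X ^ 4 + X ^ 3 - X + 1 : ℤ[X]) := by
  constructor
  · intro n
    simp only [coeff_add, coeff_sub, coeff_X_pow, coeff_X, coeff_one]
    simp only [Set.mem_insert_iff, Set.mem_singleton_iff]
    split_ifs <;> omega
  · simp

/-! ### Part 2: at most three terms -/

/-- The choice function for the division algorithm. -/
def triF (w : ℤ) : ℤ := if w = 0 then 1 else if w = 2 then -1 else if w = -2 then 1 else 0

/-- The shifted quotient sequence. -/
def triU (a b : ℕ) (x y z : ℤ) (n : ℕ) : ℤ :=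
  if _h : n < b ∨ a = 0 ∨ b ≤ a then 0
  else x * triF (y * triU a b x y z (n - a) + z * triU a b x y z (n - b))
termination_by n
decreasing_by all_goals omega

lemma triU_lt {a b : ℕ} {x y z : ℤ} {n : ℕ} (h : n < b) : triU a b x y z n = 0 := by
  rw [triU, dif_pos (Or.inl h)]

lemma triU_ge {a b : ℕ} {x y z : ℤ} (ha : 0 < a) (hab : a < b) (n : ℕ) :
    triU a b x y z (n + b) =
      x * triF (y * triU a b x y z (n + b - a) + z * triU a b x y z n) := by
  rw [triU, dif_neg (by omega), Nat.add_sub_cancel]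

lemma triF_spec {x y z : ℤ} (hx : x = -1 ∨ x = 1) (hy : y = -1 ∨ y = 1) (hz : z = -1 ∨ z = 1)
    {u v : ℤ} (hu : u = -1 ∨ u = 0 ∨ u = 1) (hv : v = -1 ∨ v = 0 ∨ v = 1) :
    (x * triF (y * u + z * v) = -1 ∨ x * triF (y * u + z * v) = 0 ∨
      x * triF (y * u + z * v) = 1) ∧
    (x * (x * triF (y * u + z * v)) + y * u + z * v = -1 ∨
      x * (x * triF (y * u + z * v)) + y * u + z * v = 1) := by
  rcases hx with rfl | rfl <;> rcases hy with rfl | rfl <;> rcases hz with rfl | rfl <;>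
    rcases hu with rfl | rfl | rfl <;> rcases hv with rfl | rfl | rfl <;> decide

lemma triU_bound {a b : ℕ} {x y z : ℤ} (ha : 0 < a) (hab : a < b)
    (hx : x = -1 ∨ x = 1) (hy : y = -1 ∨ y = 1) (hz : z = -1 ∨ z = 1) (n : ℕ) :
    triU a b x y z n = -1 ∨ triU a b x y z n = 0 ∨ triU a b x y z n = 1 := by
  induction n using Nat.strong_induction_on with
  | _ n ih =>
    by_cases h : n < b
    · rw [triU_lt h]; simp
    · obtain ⟨m, rfl⟩ : ∃ m, n = m + b := ⟨n - b, by omega⟩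
      rw [triU_ge ha hab]
      exact (triF_spec hx hy hz (ih _ (by omega)) (ih _ (by omega))).1

lemma triU_rec {a b : ℕ} {x y z : ℤ} (ha : 0 < a) (hab : a < b)
    (hx : x = -1 ∨ x = 1) (hy : y = -1 ∨ y = 1) (hz : z = -1 ∨ z = 1) (n : ℕ) :
    x * triU a b x y z (n + b) + y * triU a b x y z (n + b - a) + z * triU a b x y z n = -1 ∨
    x * triU a b x y z (n + b) + y * triU a b x y z (n + b - a) + z * triU a b x y z n = 1 := by
  have := (triF_spec hx hy hz (triU_bound ha hab hx hy hz (n + b - a))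
    (triU_bound ha hab hx hy hz n)).2
  rwa [← triU_ge ha hab] at this

lemma triU_return {a b : ℕ} {x y z : ℤ} (ha : 0 < a) (hab : a < b)
    (hx : x = -1 ∨ x = 1) (hy : y = -1 ∨ y = 1) (hz : z = -1 ∨ z = 1) :
    ∃ N, 0 < N ∧ ∀ i < b, triU a b x y z (N + i) = 0 := by
  set u := triU a b x y z with hu
  have hrec : ∀ n, x * u (n + b) + y * u (n + b - a) + z * u n = -1 ∨
    x * u (n + b) + y * u (n + b - a) + z * u n = 1 := triU_rec ha hab hx hy hz
  obtain ⟨m, m', hne, heq⟩ := Finite.exists_ne_map_eq_of_infinite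
    (fun n : ℕ => (fun i : Fin b => (u (n + i) : ZMod 2)))
  have main : ∀ k m, (∀ i < b, u (m + k + i) % 2 = u (m + i) % 2) →
      ∀ i < b, u (k + i) % 2 = u i % 2 := by
    intro k m
    induction m with
    | zero => intro h i hi; simpa using h i hi
    | succ m ih =>
      intro h
      apply ih
      intro i hi
      rcases Nat.eq_zero_or_pos i with rfl | hi0
      · have h1 := h (b - 1) (by omega)
        have h2 := h (b - a - 1) (by omega)
        rw [show m + 1 + k + (b - 1) = m + k + b by omega,
          show m + 1 + (b - 1) = m + b by omega] at h1
        rw [show m + 1 + k + (b - a - 1) = m + k + b - a by omega,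
          show m + 1 + (b - a - 1) = m + b - a by omega] at h2
        have h3 := hrec m
        have h4 := hrec (m + k)
        simp only [add_zero]
        rcases hx with rfl | rfl <;> rcases hy with rfl | rfl <;> rcases hz with rfl | rfl <;> omega
      · have h1 := h (i - 1) (by omega)
        rwa [show m + 1 + k + (i - 1) = m + k + i by omega,
          show m + 1 + (i - 1) = m + i by omega] at h1
  have fin : ∀ m m' : ℕ, m < m' →
      (fun i : Fin b => (u (m + i) : ZMod 2)) = (fun i : Fin b => (u (m' + i) : ZMod 2)) →
      ∃ N, 0 < N ∧ ∀ i < b, u (N + i) = 0 := by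
    intro m m' hlt heq
    refine ⟨m' - m, by omega, ?_⟩
    have := main (m' - m) m (fun i hi => by
      have h := congrFun heq ⟨i, hi⟩
      simp only at h
      rw [ZMod.intCast_eq_intCast_iff] at h
      rw [show m + (m' - m) + i = m' + i by omega]
      exact h.symm)
    intro i hi
    have h1 := this i hi
    have h2 : u i = 0 := triU_lt hi
    have h3 := triU_bound ha hab hx hy hz (m' - m + i)
    rw [← hu] at h3
    omega
  rcases lt_or_gt_of_ne hne with h | h
  · exact fin m m' h heq
  · exact fin m' m h heq.symm

lemma trinomial_dvd {a b : ℕ} {x y z : ℤ} (ha : 0 < a) (hab : a < b)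
    (hx : x = -1 ∨ x = 1) (hy : y = -1 ∨ y = 1) (hz : z = -1 ∨ z = 1) :
    ∃ L : ℤ[X], IsLittlewood L ∧ (C x + C y * X ^ a + C z * X ^ b) ∣ L := by
  obtain ⟨N, hN, hret⟩ := triU_return ha hab hx hy hz
  have hrec := triU_rec ha hab hx hy hz
  have hlt : ∀ n < b, triU a b x y z n = 0 := fun n h => triU_lt h
  set u := triU a b x y z with hu
  set Q : ℤ[X] := ∑ n ∈ Finset.range N, C (u (n + b)) * X ^ n with hQ
  have hQc : ∀ n, Q.coeff n = if n < N then u (n + b) else 0 := by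
    intro n
    simp [hQ, coeff_X_pow]
  have hc : ∀ n, ((C x + C y * X ^ a + C z * X ^ b) * Q).coeff n =
      x * Q.coeff n + y * (if a ≤ n then Q.coeff (n - a) else 0)
        + z * (if b ≤ n then Q.coeff (n - b) else 0) := by
    intro n
    simp only [add_mul, coeff_add, mul_assoc, coeff_C_mul, coeff_X_pow_mul']
  refine ⟨(C x + C y * X ^ a + C z * X ^ b) * Q, ?_, Dvd.intro _ rfl⟩
  have hsh : ∀ k n, k ≤ b → n < N + k → (if k ≤ n then Q.coeff (n - k) else 0) = u (n + b - k) := by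
    intro k n hk hn
    split_ifs with h
    · rw [hQc, if_pos (by omega)]; congr 1; omega
    · rw [hlt _ (by omega)]
  have hbig : ∀ k n, k ≤ b → N ≤ n → (if k ≤ n then Q.coeff (n - k) else 0) = 0 := by
    intro k n hk hn
    split_ifs with h
    · rw [hQc]
      split_ifs with h2
      · have := hret (n - k + b - N) (by omega)
        rwa [show N + (n - k + b - N) = n - k + b by omega] at this
      · rfl
    · rfl
  have hsm : ∀ n < N, ((C x + C y * X ^ a + C z * X ^ b) * Q).coeff n = -1 ∨
      ((C x + C y * X ^ a + C z * X ^ b) * Q).coeff n = 1 := by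
    intro n hn
    rw [hc, hsh a n hab.le (by omega), hsh b n le_rfl (by omega), hQc, if_pos hn,
      Nat.add_sub_cancel]
    exact hrec n
  have hdeg : ((C x + C y * X ^ a + C z * X ^ b) * Q).natDegree < N := by
    have : ((C x + C y * X ^ a + C z * X ^ b) * Q).natDegree ≤ N - 1 := by
      rw [natDegree_le_iff_coeff_eq_zero]
      intro n hn
      rw [hc, hbig a n hab.le (by omega), hbig b n le_rfl (by omega), hQc, if_neg (by omega)]
      simp
    omega
  intro i hi
  exact hsm i (by omega)

lemma binomial_dvd {b : ℕ} {x z : ℤ} (hb : 0 < b) (hx : x = -1 ∨ x = 1) (hz : z = -1 ∨ z = 1) :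
    ∃ L : ℤ[X], IsLittlewood L ∧ (C x + C z * X ^ b) ∣ L := by
  set Q : ℤ[X] := ∑ n ∈ Finset.range b, X ^ n with hQ
  have hQc : ∀ n, Q.coeff n = if n < b then 1 else 0 := by
    intro n
    simp [hQ, coeff_X_pow]
  have hc : ∀ n, ((C x + C z * X ^ b) * Q).coeff n =
      x * Q.coeff n + z * (if b ≤ n then Q.coeff (n - b) else 0) := by
    intro n
    simp only [add_mul, coeff_add, mul_assoc, coeff_C_mul, coeff_X_pow_mul']
  refine ⟨(C x + C z * X ^ b) * Q, ?_, Dvd.intro _ rfl⟩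
  have hdeg : ((C x + C z * X ^ b) * Q).natDegree ≤ 2 * b - 1 := by
    rw [natDegree_le_iff_coeff_eq_zero]
    intro n hn
    rw [hc, hQc, if_neg (by omega), if_pos (by omega), hQc, if_neg (by omega)]
    simp
  intro n hn
  rw [hc, hQc, hQc]
  by_cases h : n < b
  · rw [if_pos h, if_neg (by omega)]
    simpa using hx
  · rw [if_neg h, if_pos (by omega), if_pos (by omega)]
    simpa using hz

lemma borwein_small (P : ℤ[X]) (hP : IsBorwein P) (hcard : P.support.card ≤ 3) :
    ∃ L : ℤ[X], IsLittlewood L ∧ P ∣ L := by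
  obtain ⟨hP1, hP0⟩ := hP
  have hcoef : ∀ i, P.coeff i ≠ 0 → P.coeff i = -1 ∨ P.coeff i = 1 := by
    intro i hi
    have := hP1 i
    simp only [Set.mem_insert_iff, Set.mem_singleton_iff] at this
    omega
  have h0 : 0 ∈ P.support := mem_support_iff.mpr hP0
  have hsum : P = ∑ i ∈ P.support, C (P.coeff i) * X ^ i := P.as_sum_support_C_mul_X_pow
  have hE : P.support = insert 0 (P.support.erase 0) := (Finset.insert_erase h0).symm
  have hEc : (P.support.erase 0).card ≤ 2 := by
    rw [Finset.card_erase_of_mem h0]; omega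
  have hmem : ∀ i ∈ P.support.erase 0, 0 < i ∧ P.coeff i ≠ 0 := by
    intro i hi
    rw [Finset.mem_erase, mem_support_iff] at hi
    exact ⟨by omega, hi.2⟩
  rw [hE, Finset.sum_insert (Finset.notMem_erase _ _)] at hsum
  generalize P.support.erase 0 = E at *
  have hcases : E.card = 0 ∨ E.card = 1 ∨ E.card = 2 := by omega
  rcases hcases with h | h | h
  · rw [Finset.card_eq_zero] at h
    subst h
    refine ⟨P, ?_, dvd_rfl⟩
    intro i hi
    have hd : P.natDegree = 0 := by
      rw [hsum]; simp
    have : i = 0 := by omega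
    subst this
    exact hcoef 0 hP0
  · obtain ⟨b, rfl⟩ := Finset.card_eq_one.mp h
    obtain ⟨hb, hb'⟩ := hmem b (by simp)
    rw [Finset.sum_singleton, pow_zero, mul_one] at hsum
    rw [hsum]
    exact binomial_dvd hb (hcoef _ hP0) (hcoef _ hb')
  · obtain ⟨a, b, hab, rfl⟩ := Finset.card_eq_two.mp h
    obtain ⟨ha, ha'⟩ := hmem a (by simp)
    obtain ⟨hb, hb'⟩ := hmem b (by simp)
    rw [Finset.sum_pair hab, pow_zero, mul_one] at hsum
    rw [hsum]
    rcases lt_or_gt_of_ne hab with hlt | hlt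
    · rw [← add_assoc]
      exact trinomial_dvd ha hlt (hcoef _ hP0) (hcoef _ ha') (hcoef _ hb')
    · rw [add_comm (C (P.coeff a) * X ^ a), ← add_assoc]
      exact trinomial_dvd hb hlt (hcoef _ hP0) (hcoef _ hb') (hcoef _ ha')

/-- The least positive integer `k` for which there exists a Borwein polynomial with
exactly `k` nonzero coefficients dividing no Littlewood polynomial is `k = 4`;
moreover `X^4 + X^3 - X + 1` is such a polynomial with exactly 4 nonzero
coefficients. -/
theorem least_nonzero_terms_no_littlewood :
    IsLeast {k : ℕ | 0 < k ∧ ∃ P : Polynomial ℤ, IsBorwein P ∧ P.support.card = k ∧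
        ¬ ∃ L : Polynomial ℤ, IsLittlewood L ∧ P ∣ L} 4 ∧
      (((X ^ 4 + X ^ 3 - X + 1 : Polynomial ℤ).support.card = 4) ∧
        ¬ ∃ L : Polynomial ℤ, IsLittlewood L ∧ (X ^ 4 + X ^ 3 - X + 1 : Polynomial ℤ) ∣ L) := by
  have hcard : (X ^ 4 + X ^ 3 - X + 1 : Polynomial ℤ).support.card = 4 := by
    rw [quad_support]; rfl
  have hnd : ¬ ∃ L : Polynomial ℤ, IsLittlewood L ∧
      (X ^ 4 + X ^ 3 - X + 1 : Polynomial ℤ) ∣ L := by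
    rintro ⟨L, hL, hd⟩
    exact quad_not_dvd L hL hd
  refine ⟨⟨⟨by norm_num, _, quad_borwein, hcard, hnd⟩, ?_⟩, hcard, hnd⟩
  rintro k ⟨_, P, hP, hk, hno⟩
  by_contra hlt
  exact hno (borwein_small P hP (by omega))
end

section
/- The Newman polynomial P(X) = X^{11} + X^{10} + X^9 + X^8 + X^7 + X^5 + X^4 + X^3 + 1 factors over ℤ as P(X) = (X^2 + X + 1)(X^4 + X^3 + 1)(X^5 - X^4 + X^3 - X + 1), and P(X) divides no Littlewood polynomial, even though each of the two noncyclotomic factors X^4 + X^3 + 1 and X^5 - X^4 + X^3 - X + 1 divides some Littlewood polynomial. -/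
open Polynomial

/-- A Newman polynomial: all coefficients in {0,1} and constant term 1. -/
def IsNewman (P : Polynomial ℤ) : Prop :=
  (∀ i, P.coeff i ∈ ({0, 1} : Set ℤ)) ∧ P.coeff 0 = 1

/-! Auxiliary material: integer lists as polynomials acting by convolution. -/

namespace NewmanAux

/-- Convolution of a finite list with a two-sided sequence. -/
def conv : List ℤ → (ℤ → ℤ) → ℤ → ℤ
  | [], _, _ => 0
  | x :: l, f, k => x * f k + conv l f (k - 1)

def addL : List ℤ → List ℤ → List ℤ
  | [], l => l
  | x :: l, [] => x :: l
  | x :: l, y :: l' => (x + y) :: addL l l'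

def smulL (c : ℤ) : List ℤ → List ℤ
  | [] => []
  | x :: l => (c * x) :: smulL c l

def mulL : List ℤ → List ℤ → List ℤ
  | [], _ => []
  | x :: l, q => addL (smulL x q) (0 :: mulL l q)

def shiftL : ℕ → List ℤ → List ℤ
  | 0, l => l
  | n + 1, l => 0 :: shiftL n l

def norm1 : List ℤ → ℕ
  | [] => 0
  | x :: l => x.natAbs + norm1 l

theorem conv_add (l l' : List ℤ) (f : ℤ → ℤ) (k : ℤ) :
    conv (addL l l') f k = conv l f k + conv l' f k := by
  induction l generalizing l' k with
  | nil => simp [addL, conv]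
  | cons x l ih =>
    cases l' with
    | nil => simp [addL, conv]
    | cons y l' => simp only [addL, conv, ih]; ring

theorem conv_smul (c : ℤ) (l : List ℤ) (f : ℤ → ℤ) (k : ℤ) :
    conv (smulL c l) f k = c * conv l f k := by
  induction l generalizing k with
  | nil => simp [smulL, conv]
  | cons x l ih => simp only [smulL, conv, ih]; ring

theorem conv_mul (l q : List ℤ) (f : ℤ → ℤ) (k : ℤ) :
    conv (mulL l q) f k = conv l (conv q f) k := by
  induction l generalizing k with
  | nil => simp [mulL, conv]
  | cons x l ih => simp only [mulL, conv, ih, conv_add, conv_smul]; ring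

theorem conv_shift (s : ℕ) (l : List ℤ) (f : ℤ → ℤ) (k : ℤ) :
    conv (shiftL s l) f k = conv l f (k - s) := by
  induction s generalizing k with
  | zero => simp [shiftL]
  | succ s ih =>
    simp only [shiftL, conv, ih, zero_mul, zero_add]
    congr 1; push_cast; ring

theorem conv_bound (l : List ℤ) (f : ℤ → ℤ) (B : ℕ) (h : ∀ j, |f j| ≤ B) (k : ℤ) :
    |conv l f k| ≤ norm1 l * B := by
  induction l generalizing k with
  | nil => simp [conv, norm1]
  | cons x l ih =>
    simp only [conv, norm1]
    have h1 := abs_add_le (x * f k) (conv l f (k - 1))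
    have h2 : |x * f k| ≤ |x| * B := by
      rw [abs_mul]; exact mul_le_mul_of_nonneg_left (h k) (abs_nonneg x)
    have h3 := ih (k - 1)
    push_cast
    rw [add_mul]
    linarith

/-- The degree 9 polynomial, palindromically indexed from the leading coefficient. -/
def qL : List ℤ := [1, 0, 0, 1, 0, -1, 2, 0, -1, 1]

/-- The error list of an approximate division of `X^s u` by `qL`. -/
def errL (s : ℕ) (u S : List ℤ) : List ℤ :=
  addL (shiftL s u) (smulL (-1) (mulL S qL))

theorem cert (m : ℤ → ℤ) (ha : ∀ k, |conv qL m k| ≤ 1) (B : ℕ) (hB : ∀ k, |m k| ≤ B)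
    (s : ℕ) (u S : List ℤ) (k : ℤ) :
    |conv u m k| ≤ norm1 S + norm1 (errL s u S) * B := by
  have h1 : conv u m k = conv (errL s u S) m (k + s) + conv S (conv qL m) (k + s) := by
    simp only [errL, conv_add, conv_smul, conv_mul, conv_shift]
    rw [show k + (s : ℤ) - s = k by ring]; ring
  have h2 := conv_bound (errL s u S) m B hB (k + s)
  have h3 := conv_bound S (conv qL m) 1 (by simpa using ha) (k + s)
  have h4 := abs_add_le (conv (errL s u S) m (k + s)) (conv S (conv qL m) (k + s))
  rw [h1]
  push_cast at h3
  linarith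

/-- A window of nine consecutive terms, most recent first; every term is shifted by 4. -/
inductive St : Type
  | mk (a b c d e f g h i : ℕ) : St

def St.dot : St → St → ℕ
  | .mk a b c d e f g h i, .mk a' b' c' d' e' f' g' h' i' =>
    Nat.add (Nat.mul a a') (Nat.add (Nat.mul b b') (Nat.add (Nat.mul c c')
      (Nat.add (Nat.mul d d') (Nat.add (Nat.mul e e') (Nat.add (Nat.mul f f')
      (Nat.add (Nat.mul g g') (Nat.add (Nat.mul h h') (Nat.mul i i'))))))))

/-- The weights of a functional are stored shifted by one million. -/
def St.toU : St → List ℤ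
  | .mk a b c d e f g h i => [a - 1000000, b - 1000000, c - 1000000, d - 1000000, e - 1000000,
      f - 1000000, g - 1000000, h - 1000000, i - 1000000]

def St.total : St → ℕ
  | .mk a b c d e f g h i =>
    Nat.add a (Nat.add b (Nat.add c (Nat.add d (Nat.add e (Nat.add f (Nat.add g
      (Nat.add h i)))))))

def St.eqb : St → St → Bool
  | .mk a b c d e f g h i, .mk a' b' c' d' e' f' g' h' i' =>
    Nat.beq a a' && (Nat.beq b b' && (Nat.beq c c' && (Nat.beq d d' && (Nat.beq e e' &&
      (Nat.beq f f' && (Nat.beq g g' && (Nat.beq h h' && Nat.beq i i')))))))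

theorem St.eqb_iff (s t : St) : s.eqb t = true ↔ s = t := by
  cases s; cases t; simp [St.eqb]

noncomputable def memb (s : St) (l : List St) : Bool :=
  List.rec (motive := fun _ => Bool) false (fun t _ ih => s.eqb t || ih) l

theorem memb_nil (s : St) : memb s [] = false := rfl

theorem memb_cons (s t : St) (l : List St) : memb s (t :: l) = (s.eqb t || memb s l) := rfl

theorem memb_iff (s : St) (l : List St) : memb s l = true ↔ s ∈ l := by
  induction l with
  | nil => simp [memb_nil]
  | cons t l ih => simp [memb_cons, ih, St.eqb_iff]

/-- Evaluate a small number to a literal before continuing; large values are discarded. -/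
def force (x : ℕ) (dflt : Bool) (k : ℕ → Bool) : Bool :=
  bif Nat.beq x 4 then k 4 else
  bif Nat.beq x 5 then k 5 else
  bif Nat.beq x 3 then k 3 else
  bif Nat.beq x 6 then k 6 else
  bif Nat.beq x 2 then k 2 else
  bif Nat.beq x 7 then k 7 else
  bif Nat.beq x 1 then k 1 else
  bif Nat.beq x 8 then k 8 else
  bif Nat.beq x 0 then k 0 else dflt

theorem force_eq (x : ℕ) (hx : x ≤ 8) (dflt : Bool) (k : ℕ → Bool) :
    force x dflt k = k x := by
  interval_cases x <;> rfl

theorem force_cases (x : ℕ) (dflt : Bool) (k : ℕ → Bool) :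
    force x dflt k = k x ∨ force x dflt k = dflt := by
  by_cases hx : x ≤ 8
  · exact Or.inl (force_eq x hx dflt k)
  · right
    have key : ∀ y : ℕ, y ≤ 8 → Nat.beq x y = false := by
      intro y hy
      rw [Bool.eq_false_iff]
      intro h
      rw [Nat.beq_eq] at h
      exact hx (h ▸ hy)
    unfold force
    rw [key 0 (by decide), key 1 (by decide), key 2 (by decide), key 3 (by decide),
      key 4 (by decide), key 5 (by decide), key 6 (by decide), key 7 (by decide),
      key 8 (by decide)]
    rfl

/-- Test of one functional: the shifted weights and the two shifted bounds. -/
def okOne (v t c1 c2 : ℕ) : Bool :=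
  Nat.ble v (Nat.add t c1) && Nat.ble (Nat.add t c2) v

noncomputable def okAll (s : St) (F : List (St × ℕ × ℕ)) : Bool :=
  List.rec (motive := fun _ => Bool) true (fun p _ ih =>
    okOne (Nat.add (p.1.dot s) 100000000) (Nat.mul 1000000 s.total) p.2.1 p.2.2 && ih) F

theorem okAll_cons (s : St) (p : St × ℕ × ℕ) (F : List (St × ℕ × ℕ)) :
    okAll s (p :: F) =
      (okOne (Nat.add (p.1.dot s) 100000000) (Nat.mul 1000000 s.total) p.2.1 p.2.2 && okAll s F) :=
  rfl

def Passes (s : St) (p : St × ℕ × ℕ) : Prop :=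
  p.1.dot s + 100000000 ≤ 1000000 * s.total + p.2.1 ∧
    1000000 * s.total + p.2.2 ≤ p.1.dot s + 100000000

theorem okAll_of (s : St) (F : List (St × ℕ × ℕ)) (h : ∀ p ∈ F, Passes s p) :
    okAll s F = true := by
  induction F with
  | nil => rfl
  | cons p l ih =>
    obtain ⟨u, c1, c2⟩ := p
    simp only [okAll_cons, okOne, Bool.and_eq_true, Nat.ble_eq]
    exact ⟨h (u, c1, c2) (by simp), ih fun p hp => h p (by simp [hp])⟩


/-- Numerators (over 1000) of an approximate inverse of the degree 9 factor. -/
def greenS : List ℤ :=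
  [-1, 0, 0, 0, -1, 0, 2, 0, -1, -2, 3, 2, -2, -2, -1, 8, -2, -7, -1, 5, 13, -18, -6, 9, 14, 4,
  -47, 22, 24, 13, -34, -66, 109, 5, -22, -100, 0, 250, -159, -64, -132, 255, 287, 395, 99,
  -41, -285, -227, -206, -19, 21, 110, 66, 88, 38, 51, 1, -5, -55, -51, -63, -24, -7, 31, 33,
  40, 20, 13, -8, -11, -20, -15, -15, -5, -1, 9, 10, 13, 7, 4, -3, -5, -7, -6, -5, -1, 1, 3,
  4, 4, 2, 1, -1, -2, -2, -2, -1, 0, 0, 1, 1, 1, 1, 0, 0, -1, -1, -1]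

/-- Weights of the functional number 0. -/
def fS0 : List ℤ :=
  [0, 2, 1, -2, -2, 3, 3, -1, -5, 0, 8, 0, -8, -5, 10, 12, -15, -13, 7, 27, -4, -42, 6, 37, 28,
  -60, -52, 81, 56, -32, -151, 44, 209, -44, -180, -162, 364, 213, -419, -262, 151, 853, -389,
  -977, 248, 914, 897, -2188, -699, 2008, 1363, -819, -4765, 2979, 4208, -972, -5035, -4630,
  12837, 1104, -8706, -8183, 5566, 25621, -20449, -16073, 1073, 30649, 20753, -72242, 7926,
  32522, 54676, -44095, -129124, 127311, 50869, 25761, -200590, -67207]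

/-- Weights of the functional number 1. -/
def fS1 : List ℤ :=
  [-2, 0, 2, 0, -1, -2, 3, 2, -3, -3, 0, 9, -3, -9, 0, 7, 12, -20, -8, 14, 16, 0, -51, 24, 36,
  5, -42, -64, 121, 15, -53, -99, 17, 272, -175, -123, -80, 285, 292, -685, 59, 129, 683,
  -285, -1353, 1110, 303, 803, -2016, -1017, 3568, -868, 145, -4727, 3077, 5957, -6097, -195,
  -6389, 14191, 1012, -16494, 5612, -4130, 31408, -27080, -20581, 27771, -1453, 42743, -95561,
  25290, 61727, -19922, 26859, -194423, 207109, 28486, -87258, -19556]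

/-- Weights of the functional number 2. -/
def fS2 : List ℤ :=
  [1, 2, -1, -2, 0, 4, 1, -5, -2, 4, 7, -7, -9, 6, 11, 1, -23, -1, 26, 7, -22, -36, 41, 40,
  -33, -56, -6, 127, -16, -122, -41, 121, 187, -253, -161, 149, 313, 0, -695, 194, 538, 270,
  -727, -923, 1479, 564, -578, -1857, 311, 3635, -1535, -2212, -1934, 4644, 4084, -8150,
  -1619, 1731, 11492, -4262, -17771, 9767, 8671, 13568, -30482, -14569, 41502, 3866, -2715,
  -71582, 41434, 78251, -51607, -35966, -88333, 198569, 24769, -188643, -18305, -4352]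

/-- Weights of the functional number 3. -/
def fS3 : List ℤ :=
  [1, 1, -2, -1, 1, 1, 0, -4, 2, 4, 1, -4, -6, 10, 3, -5, -9, 1, 23, -12, -14, -6, 24, 27, -57,
  -4, 17, 57, -20, -120, 82, 47, 59, -164, -107, 303, -31, -29, -382, 216, 558, -478, -127,
  -472, 1124, 254, -1475, 303, -131, 2507, -1946, -2198, 2342, 339, 3238, -7525, 921, 6139,
  -1274, 1388, -15600, 15241, 5809, -8715, -2859, -18967, 47742, -19152, -18353, -2330, -3530,
  89505, -106450, 7373, 11580, 40686, 89990, -281016, 178387, -122]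

/-- Weights of the functional number 4. -/
def fS4 : List ℤ :=
  [1, 1, -2, -2, 1, 3, 0, -5, 0, 6, 3, -7, -7, 9, 10, -6, -17, 3, 27, -1, -29, -15, 38, 34,
  -50, -47, 34, 91, -25, -137, 15, 147, 77, -219, -154, 269, 220, -176, -489, 195, 683, -126,
  -746, -396, 1249, 642, -1408, -1059, 941, 2641, -1416, -3284, 761, 3869, 1993, -7110, -2320,
  7035, 5401, -5293, -14086, 9608, 15092, -3686, -20913, -9237, 39832, 6096, -33427, -29680,
  31979, 72954, -61116, -65921, 13288, 118718, 35395, -216566, -750, 150711]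

/-- Weights of the functional number 5. -/
def fS5 : List ℤ :=
  [1, 0, 0, 0, -1, 2, -1, 0, -1, 1, 3, -4, 1, -1, 4, 2, -10, 7, -2, 8, -8, -14, 24, -10, 13,
  -31, 3, 49, -44, 25, -69, 74, 42, -118, 73, -115, 236, -110, -181, 215, -182, 486, -607, 35,
  441, -351, 745, -1624, 1202, 294, -701, 887, -3003, 4360, -1900, -656, 755, -3784, 10027,
  -9787, 3039, -597, -1768, 15801, -27833, 19842, -8665, 7445, 12321, -54407, 66893, -43101,
  35547, -21786, -64455, 156270, -150225, 119476, -127849, 19348]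

def fU0 : St := St.mk 618048 1101934 1093800 995677 742469 890695 1226350 866617 932793

def fU1 : St := St.mk 1240189 398436 1319396 1365511 443507 1139512 1115743 932298 980444

def fU2 : St := St.mk 565980 1338423 1286195 354117 1141542 1204708 829662 986047 995648

def fU3 : St := St.mk 897412 1055946 1456667 230475 1307591 1370762 540598 1178509 999878

def fU4 : St := St.mk 825362 1206098 1358857 462188 931113 1553383 784184 848539 1150711

def fU5 : St := St.mk 755648 1392249 642090 1146076 1031449 768994 1247325 852803 1019348

/-- Functionals on windows, with their bounds. -/
def funcs : List (St × ℕ × ℕ) :=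
  [(fU0, 98873834, 96873230),
   (fU1, 100740450, 98739838),
   (fU2, 99809488, 97809088),
   (fU3, 101151543, 99151161),
   (fU4, 101481992, 99481488),
   (fU5, 100424110, 98423746)]

/-- The next (shifted) term of the quotient sequence; `x` is the next coefficient plus 12. -/
def nextm (x : ℕ) : St → ℕ
  | .mk _ _ c _ e f _ h i =>
    Nat.sub (Nat.add x (Nat.add e h)) (Nat.add c (Nat.add (Nat.add f f) i))

def St.push (x : ℕ) : St → St
  | .mk a b c d e f g h _ => .mk x a b c d e f g h

noncomputable def pushIf (t : St) (acc : List St) (k : List St → Bool) : Bool :=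
  bif okAll t funcs then (bif memb t acc then k acc else k (t :: acc)) else k acc

/-- Add to `acc` the successor of the window by the coefficient `x`, if it is admissible. -/
noncomputable def child (x : ℕ) (s : St) (acc : List St) (k : List St → Bool) : Bool :=
  force (nextm x s) (k acc) fun y =>
    match s with
    | .mk a b c d e f g h _ => pushIf (.mk y a b c d e f g h) acc k

noncomputable def expand (k : List St → Bool) (l : List St) : List St → Bool :=
  List.rec (motive := fun _ => List St → Bool) k (fun s _ ih acc => child 13 s acc fun acc1 =>
      child 11 s acc1 ih) l

def zeroSt : St := .mk 4 4 4 4 4 4 4 4 4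

noncomputable def search (n : ℕ) : List St → Bool :=
  Nat.rec (motive := fun _ => List St → Bool) (fun l => l.isEmpty)
    (fun _ ih l => bif memb zeroSt l then false else expand ih l []) n

theorem search_zero (l : List St) : search 0 l = l.isEmpty := rfl

theorem search_succ (n : ℕ) (l : List St) : search (n + 1) l =
    bif memb zeroSt l then false else expand (search n) l [] := rfl

def startSt : St := .mk 5 4 4 4 4 4 4 4 4

theorem pushIf_spec (t : St) (acc : List St) (k : List St → Bool) (h : pushIf t acc k = true) :
    ∃ acc', acc ⊆ acc' ∧ (okAll t funcs = true → t ∈ acc') ∧ k acc' = true := by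
  unfold pushIf at h
  cases h1 : okAll t funcs
  · rw [h1] at h
    exact ⟨acc, fun _ h => h, by simp, h⟩
  · rw [h1] at h
    cases h2 : memb t acc
    · rw [h2] at h
      exact ⟨t :: acc, by simp, by simp, h⟩
    · rw [h2] at h
      exact ⟨acc, fun _ h => h, fun _ => (memb_iff _ _).mp h2, h⟩

def Good (t : St) : Prop := okAll t funcs = true

theorem child_spec (x : ℕ) (s : St) (acc : List St) (k : List St → Bool)
    (h : child x s acc k = true) :
    ∃ acc', acc ⊆ acc' ∧ (nextm x s ≤ 8 → Good (s.push (nextm x s)) →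
      s.push (nextm x s) ∈ acc') ∧ k acc' = true := by
  obtain ⟨a, b, c, d, e, f, g, hh, i⟩ := s
  unfold child at h
  by_cases hx : nextm x (.mk a b c d e f g hh i) ≤ 8
  · rw [force_eq _ hx] at h
    obtain ⟨acc', h1, h2, h3⟩ := pushIf_spec _ _ _ h
    exact ⟨acc', h1, fun _ h => h2 h, h3⟩
  · rcases force_cases (nextm x (.mk a b c d e f g hh i)) (k acc) _ with h' | h'
    · rw [h'] at h
      obtain ⟨acc', h1, h2, h3⟩ := pushIf_spec _ _ _ h
      exact ⟨acc', h1, fun _ h => h2 h, h3⟩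
    · rw [h'] at h
      exact ⟨acc, fun _ h => h, fun h => absurd h hx, h⟩

theorem expand_spec (k : List St → Bool) (l acc : List St) (h : expand k l acc = true) :
    ∃ acc', acc ⊆ acc' ∧ (∀ s ∈ l, ∀ x : ℕ, (x = 13 ∨ x = 11) → nextm x s ≤ 8 →
      Good (s.push (nextm x s)) → s.push (nextm x s) ∈ acc') ∧ k acc' = true := by
  induction l generalizing acc with
  | nil => exact ⟨acc, fun _ h => h, by simp, h⟩
  | cons s l ih =>
    obtain ⟨acc1, h1, h2, h3⟩ := child_spec _ _ _ _ h
    obtain ⟨acc2, h4, h5, h6⟩ := child_spec _ _ _ _ h3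
    obtain ⟨acc3, h7, h8, h9⟩ := ih acc2 h6
    refine ⟨acc3, fun _ h => h7 (h4 (h1 h)), ?_, h9⟩
    intro s' hs' x hx hb hg
    rcases List.mem_cons.mp hs' with rfl | hs'
    · rcases hx with rfl | rfl
      · exact h7 (h4 (h2 hb hg))
      · exact h7 (h5 hb hg)
    · exact h8 s' hs' x hx hb hg

/-- Shift an integer of absolute value at most 4 to a natural number. -/
def enc (z : ℤ) : ℕ := (z + 4).toNat

theorem enc_cast (z : ℤ) (h : |z| ≤ 4) : (enc z : ℤ) = z + 4 := by
  have := (abs_le.mp h).1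
  unfold enc
  omega

/-- The window ending at `k`. -/
def win (m : ℤ → ℤ) (k : ℤ) : St :=
  .mk (enc (m k)) (enc (m (k - 1))) (enc (m (k - 1 - 1))) (enc (m (k - 1 - 1 - 1)))
    (enc (m (k - 1 - 1 - 1 - 1)))
    (enc (m (k - 1 - 1 - 1 - 1 - 1))) (enc (m (k - 1 - 1 - 1 - 1 - 1 - 1)))
    (enc (m (k - 1 - 1 - 1 - 1 - 1 - 1 - 1))) (enc (m (k - 1 - 1 - 1 - 1 - 1 - 1 - 1 - 1)))

def sumL : List ℤ → ℤ
  | [] => 0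
  | x :: l => x + sumL l

theorem dot_win (u : St) (m : ℤ → ℤ) (hB : ∀ k, |m k| ≤ 4) (k : ℤ) :
    (u.dot (win m k) : ℤ) =
      conv u.toU m k + 4 * sumL u.toU + 1000000 * ((win m k).total : ℤ) := by
  cases u
  simp only [St.dot, win, St.toU, St.total, conv, sumL, Nat.add_eq, Nat.mul_eq]
  push_cast
  simp only [enc_cast _ (hB _)]
  ring

theorem nextm_win (m : ℤ → ℤ) (hB : ∀ k, |m k| ≤ 4) (k : ℤ) (x : ℕ)
    (hx : (x : ℤ) = conv qL m (k + 1) + 12) :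
    nextm x (win m k) = enc (m (k + 1)) := by
  have h : k + 1 - 1 = k := by ring
  simp only [conv, qL, h] at hx
  have h0 := enc_cast _ (hB (k + 1))
  have h1 := enc_cast _ (hB (k - 1 - 1))
  have h2 := enc_cast _ (hB (k - 1 - 1 - 1 - 1))
  have h3 := enc_cast _ (hB (k - 1 - 1 - 1 - 1 - 1))
  have h4 := enc_cast _ (hB (k - 1 - 1 - 1 - 1 - 1 - 1 - 1))
  have h5 := enc_cast _ (hB (k - 1 - 1 - 1 - 1 - 1 - 1 - 1 - 1))
  simp only [nextm, win, Nat.add_eq, Nat.sub_eq]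
  omega

theorem push_win (m : ℤ → ℤ) (k : ℤ) :
    (win m k).push (enc (m (k + 1))) = win m (k + 1) := by
  have h : k + 1 - 1 = k := by ring
  simp only [win, St.push, h]

def certCheck (u : St) (S : List ℤ) (b c1 c2 : ℕ) : Bool :=
  Nat.ble (norm1 S + norm1 (errL 80 u.toU S) * 4) b &&
    (decide (100000000 + 4 * sumL u.toU + b ≤ c1) && decide (c2 + b ≤ 100000000 + 4 * sumL u.toU))

theorem functional_bound (m : ℤ → ℤ) (ha : ∀ k, |conv qL m k| ≤ 1) (hB : ∀ k, |m k| ≤ 4)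
    (u : St) (S : List ℤ) (b c1 c2 : ℕ) (h : certCheck u S b c1 c2 = true) (k : ℤ) :
    Passes (win m k) (u, c1, c2) := by
  have h1 := cert m ha 4 hB 80 u.toU S k
  simp only [certCheck, Bool.and_eq_true, Nat.ble_eq, decide_eq_true_eq] at h
  obtain ⟨h2, h4, h5⟩ := h
  have h3 : ((norm1 S + norm1 (errL 80 u.toU S) * 4 : ℕ) : ℤ) ≤ b := by exact_mod_cast h2
  push_cast at h3
  push_cast at h1
  have h6 := dot_win u m hB k
  obtain ⟨h7, h8⟩ := abs_le.mp (h1.trans h3)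
  unfold Passes
  dsimp only
  constructor <;> omega

theorem small (m : ℤ → ℤ) (ha : ∀ k, |conv qL m k| ≤ 1) (B : ℕ) (hB : ∀ k, |m k| ≤ B) :
    ∀ k, |m k| ≤ 4 := by
  have e1 : norm1 greenS = 3857 := by decide +kernel
  have e2 : norm1 (errL 43 [1000] greenS) = 77 := by decide +kernel
  induction B with
  | zero => intro k; have := hB k; push_cast at this; linarith
  | succ B ih =>
    by_cases hB4 : B < 4
    · intro k
      have := hB k
      have h4 : ((B + 1 : ℕ) : ℤ) ≤ 4 := by exact_mod_cast hB4
      linarith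
    · apply ih
      intro k
      have h := cert m ha (B + 1) hB 43 [1000] greenS k
      rw [e1, e2] at h
      simp only [conv, add_zero, abs_mul] at h
      norm_num at h
      omega

theorem win_good (m : ℤ → ℤ) (ha : ∀ k, |conv qL m k| ≤ 1) (hB : ∀ k, |m k| ≤ 4) (k : ℤ) :
    Good (win m k) := by
  refine okAll_of _ _ ?_
  intro p hp
  simp only [funcs, List.mem_cons, List.not_mem_nil, or_false] at hp
  rcases hp with rfl | rfl | rfl | rfl | rfl | rfl
  · exact functional_bound m ha hB fU0 fS0 1000302 98873834 96873230 (by decide +kernel) k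
  · exact functional_bound m ha hB fU1 fS1 1000306 100740450 98739838 (by decide +kernel) k
  · exact functional_bound m ha hB fU2 fS2 1000200 99809488 97809088 (by decide +kernel) k
  · exact functional_bound m ha hB fU3 fS3 1000191 101151543 99151161 (by decide +kernel) k
  · exact functional_bound m ha hB fU4 fS4 1000252 101481992 99481488 (by decide +kernel) k
  · exact functional_bound m ha hB fU5 fS5 1000182 100424110 98423746 (by decide +kernel) k
theorem search_spec (m : ℤ → ℤ) (ha : ∀ k, |conv qL m k| ≤ 1) (hB : ∀ k, |m k| ≤ 4)
    (N : ℕ) (hN : win m N = zeroSt)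
    (hL : ∀ k : ℕ, k ≤ N → conv qL m k = 1 ∨ conv qL m k = -1)
    (n : ℕ) (l : List St) (h : search n l = true) (k : ℕ) (hk : k ≤ N) (hw : win m k ∈ l) :
    False := by
  induction n generalizing l k with
  | zero =>
    simp only [search_zero, List.isEmpty_iff] at h
    simp [h] at hw
  | succ n ih =>
    rw [search_succ] at h
    cases hz : memb zeroSt l
    · rw [hz] at h
      simp only [cond_false] at h
      obtain ⟨acc, -, h2, h3⟩ := expand_spec _ _ _ h
      rcases hk.eq_or_lt with rfl | hk
      · rw [hN, ← memb_iff, hz] at hw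
        exact absurd hw (by simp)
      · obtain ⟨x, hx, hx'⟩ : ∃ x : ℕ, (x = 13 ∨ x = 11) ∧
            (x : ℤ) = conv qL m ((k : ℤ) + 1) + 12 := by
          have h5 := hL (k + 1) hk
          push_cast at h5
          rcases h5 with h5 | h5
          · exact ⟨13, by simp, by rw [h5]; norm_num⟩
          · exact ⟨11, by simp, by rw [h5]; norm_num⟩
        have h4 := h2 _ hw x hx
        rw [nextm_win m hB k x hx', push_win] at h4
        refine ih acc h3 (k + 1) hk ?_
        push_cast
        refine h4 ?_ (win_good m ha hB _)
        have h6 := enc_cast _ (hB ((k : ℤ) + 1))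
        have h7 := (abs_le.mp (hB ((k : ℤ) + 1))).2
        omega
    · rw [hz] at h
      simp at h

theorem search_true : search 300 [startSt] = true := by decide +kernel

theorem no_seq (m : ℤ → ℤ) (B : ℕ) (hB : ∀ k, |m k| ≤ B) (hneg : ∀ k < 0, m k = 0)
    (ha : ∀ k, |conv qL m k| ≤ 1) (N : ℕ) (hN : ∀ k, (N : ℤ) - 9 < k → m k = 0)
    (hL : ∀ k : ℕ, k ≤ N → conv qL m k = 1 ∨ conv qL m k = -1) : False := by
  have key : ∀ m : ℤ → ℤ, (∀ k, |m k| ≤ B) → (∀ k < 0, m k = 0) →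
      (∀ k, |conv qL m k| ≤ 1) → (∀ k, (N : ℤ) - 9 < k → m k = 0) →
      (∀ k : ℕ, k ≤ N → conv qL m k = 1 ∨ conv qL m k = -1) → m 0 = 1 → False := by
    intro m hB hneg ha hN hL h0
    refine search_spec m ha (small m ha B hB) N ?_ hL 300 _ search_true 0 (Nat.zero_le _) ?_
    · unfold win zeroSt
      congr 1 <;> (rw [hN _ (by omega)]; rfl)
    · rw [List.mem_singleton]
      unfold win startSt
      simp only [Nat.cast_zero]
      rw [h0]
      congr 1 <;> (rw [hneg _ (by omega)]; rfl)
  have hq0 : conv qL m 0 = m 0 := by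
    simp only [conv, qL]
    rw [hneg (0 - 1) (by omega), hneg (0 - 1 - 1) (by omega), hneg (0 - 1 - 1 - 1) (by omega),
      hneg (0 - 1 - 1 - 1 - 1) (by omega), hneg (0 - 1 - 1 - 1 - 1 - 1) (by omega),
      hneg (0 - 1 - 1 - 1 - 1 - 1 - 1) (by omega), hneg (0 - 1 - 1 - 1 - 1 - 1 - 1 - 1) (by omega),
      hneg (0 - 1 - 1 - 1 - 1 - 1 - 1 - 1 - 1) (by omega),
      hneg (0 - 1 - 1 - 1 - 1 - 1 - 1 - 1 - 1 - 1) (by omega)]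
    ring
  have h0 := hL 0 (Nat.zero_le _)
  rw [Nat.cast_zero, hq0] at h0
  rcases h0 with h0 | h0
  · exact key m hB hneg ha hN hL h0
  · have hc : ∀ k, conv qL (fun j => - m j) k = - conv qL m k := by
      intro k; simp only [conv, qL]; ring
    refine key (fun j => - m j) (by simpa using hB) (fun k hk => by simp [hneg k hk])
      (fun k => by rw [hc, abs_neg]; exact ha k) (fun k hk => by simp [hN k hk]) ?_ (by simp [h0])
    intro k hk
    rw [hc]
    rcases hL k hk with h | h <;> rw [h] <;> simp

/-- Coefficients indexed by the integers. -/
noncomputable def cz (p : ℤ[X]) (j : ℤ) : ℤ := if 0 ≤ j then p.coeff j.toNat else 0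

theorem cz_add (p q : ℤ[X]) (j : ℤ) : cz (p + q) j = cz p j + cz q j := by
  unfold cz; split_ifs <;> simp

theorem cz_sub (p q : ℤ[X]) (j : ℤ) : cz (p - q) j = cz p j - cz q j := by
  unfold cz; split_ifs <;> simp

theorem cz_X_pow_mul (i : ℕ) (p : ℤ[X]) (j : ℤ) : cz (X ^ i * p) j = cz p (j - i) := by
  unfold cz
  by_cases h : 0 ≤ j
  · rw [if_pos h, coeff_X_pow_mul']
    by_cases h' : i ≤ j.toNat
    · rw [if_pos h', if_pos (by omega)]
      congr 1; omega
    · rw [if_neg h', if_neg (by omega)]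
  · rw [if_neg h, if_neg (by omega)]

theorem no_littlewood (L M : ℤ[X]) (hL : IsLittlewood L)
    (h : L = (X ^ 4 + X ^ 3 + 1) * (X ^ 5 - X ^ 4 + X ^ 3 - X + 1) * M) : False := by
  have hL0 : L ≠ 0 := by
    rintro rfl
    have := hL 0 (by simp)
    simp at this
  have hM0 : M ≠ 0 := by
    rintro rfl
    exact hL0 (by simpa using h)
  have hd : L.natDegree = M.natDegree + 9 := by
    have hA : (X ^ 4 + X ^ 3 + 1 : ℤ[X]).natDegree = 4 := by compute_degree!
    have hB : (X ^ 5 - X ^ 4 + X ^ 3 - X + 1 : ℤ[X]).natDegree = 5 := by compute_degree!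
    have hA0 : (X ^ 4 + X ^ 3 + 1 : ℤ[X]) ≠ 0 := by
      intro h; rw [h] at hA; simp at hA
    have hB0 : (X ^ 5 - X ^ 4 + X ^ 3 - X + 1 : ℤ[X]) ≠ 0 := by
      intro h; rw [h] at hB; simp at hB
    rw [h, natDegree_mul (mul_ne_zero hA0 hB0) hM0, natDegree_mul hA0 hB0, hA, hB]
    omega
  have h' : L = X ^ 9 * M + X ^ 6 * M - X ^ 4 * M + X ^ 3 * M + X ^ 3 * M - X ^ 1 * M
      + X ^ 0 * M := by
    rw [h]; ring
  set d := M.natDegree with hdM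
  have hconv : ∀ k : ℤ, conv qL (fun k => cz M (d - k)) k = cz L (d + 9 - k) := by
    intro k
    rw [h']
    simp only [cz_add, cz_sub, cz_X_pow_mul, conv, qL]
    push_cast
    ring_nf
  have hcz : ∀ j : ℕ, j ≤ d + 9 → cz L j = 1 ∨ cz L j = -1 := by
    intro j hj
    have := hL j (by omega)
    simp only [cz, Nat.cast_nonneg, if_true, Int.toNat_natCast]
    simpa [or_comm] using this
  refine no_seq (fun k => cz M (d - k)) (∑ i ∈ Finset.range (d + 1), (M.coeff i).natAbs)
    ?_ ?_ ?_ (d + 9) ?_ ?_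
  · intro k
    try dsimp only
    unfold cz
    split_ifs with hk
    · by_cases hi : ((d : ℤ) - k).toNat ≤ d
      · have := Finset.single_le_sum (f := fun i => (M.coeff i).natAbs)
          (fun i _ => Nat.zero_le _) (Finset.mem_range.mpr (Nat.lt_succ_of_le hi))
        rw [Int.abs_eq_natAbs]
        exact_mod_cast this
      · rw [coeff_eq_zero_of_natDegree_lt (by omega)]
        simp only [abs_zero]
        positivity
    · simp only [abs_zero]
      positivity
  · intro k hk
    try dsimp only
    unfold cz
    rw [if_pos (by omega), coeff_eq_zero_of_natDegree_lt (by omega)]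
  · intro k
    rw [hconv]
    by_cases hk : 0 ≤ (d : ℤ) + 9 - k
    · obtain ⟨j, hj⟩ := Int.eq_ofNat_of_zero_le hk
      rw [hj]
      by_cases hj' : j ≤ d + 9
      · rcases hcz j hj' with h | h <;> rw [h] <;> simp
      · unfold cz
        rw [if_pos (by omega), coeff_eq_zero_of_natDegree_lt (by omega)]
        simp
    · unfold cz
      rw [if_neg hk]; simp
  · intro k hk
    try dsimp only
    unfold cz
    push_cast at hk
    rw [if_neg (by omega)]
  · intro k hk
    rw [hconv]
    have := hcz (d + 9 - k) (by omega)
    rw [Nat.cast_sub hk] at this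
    exact_mod_cast this

/-- The polynomial with the given list of coefficients, constant term first. -/
noncomputable def ofL : List ℤ → ℤ[X]
  | [] => 0
  | x :: l => C x + X * ofL l

theorem ofL_coeff (l : List ℤ) (i : ℕ) : (ofL l).coeff i = l.getD i 0 := by
  induction l generalizing i with
  | nil => simp [ofL]
  | cons x l ih =>
    cases i with
    | zero => simp [ofL]
    | succ i => rw [ofL, coeff_add, coeff_X_mul, coeff_C_succ, ih]; simp

theorem ofL_add (l l' : List ℤ) : ofL (addL l l') = ofL l + ofL l' := by
  induction l generalizing l' with
  | nil => simp [addL, ofL]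
  | cons x l ih =>
    cases l' with
    | nil => simp [addL, ofL]
    | cons y l' => simp only [addL, ofL, ih, C_add]; ring

theorem ofL_smul (c : ℤ) (l : List ℤ) : ofL (smulL c l) = C c * ofL l := by
  induction l with
  | nil => simp [smulL, ofL]
  | cons x l ih => simp only [smulL, ofL, ih, C_mul]; ring

theorem ofL_mul (l q : List ℤ) : ofL (mulL l q) = ofL l * ofL q := by
  induction l with
  | nil => simp [mulL, ofL]
  | cons x l ih => simp only [mulL, ofL, ih, ofL_add, ofL_smul, C_0]; ring

theorem littlewood_ofL (l : List ℤ) (hl : l ≠ []) (h : ∀ x ∈ l, x = -1 ∨ x = 1) :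
    IsLittlewood (ofL l) := by
  intro i hi
  have hlen : 0 < l.length := List.length_pos_iff.mpr hl
  have hdeg : (ofL l).natDegree ≤ l.length - 1 := by
    rw [natDegree_le_iff_coeff_eq_zero]
    intro j hj
    rw [ofL_coeff, List.getD_eq_default _ _ (by omega)]
  rw [ofL_coeff, List.getD_eq_getElem _ _ (by omega)]
  simpa using h _ (List.getElem_mem (by omega : i < l.length))

theorem newman_ofL (l : List ℤ) (h : ∀ x ∈ l, x = 0 ∨ x = 1) (h0 : l.getD 0 0 = 1) :
    IsNewman (ofL l) := by
  refine ⟨fun i => ?_, by rw [ofL_coeff, h0]⟩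
  rw [ofL_coeff]
  by_cases hi : i < l.length
  · rw [List.getD_eq_getElem _ _ hi]
    simpa using h _ (List.getElem_mem hi)
  · rw [List.getD_eq_default _ _ (by omega)]
    simp

end NewmanAux


/-- The Newman polynomial
`P = X^11 + X^10 + X^9 + X^8 + X^7 + X^5 + X^4 + X^3 + 1` factors as
`(X^2 + X + 1)(X^4 + X^3 + 1)(X^5 - X^4 + X^3 - X + 1)` and divides no Littlewood
polynomial, although both noncyclotomic factors have Littlewood multiples. -/
theorem newman_product_no_littlewood :
    IsNewman (X ^ 11 + X ^ 10 + X ^ 9 + X ^ 8 + X ^ 7 + X ^ 5 + X ^ 4 + X ^ 3 + 1 :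
      Polynomial ℤ) ∧
    (X ^ 11 + X ^ 10 + X ^ 9 + X ^ 8 + X ^ 7 + X ^ 5 + X ^ 4 + X ^ 3 + 1 : Polynomial ℤ) =
      (X ^ 2 + X + 1) * (X ^ 4 + X ^ 3 + 1) * (X ^ 5 - X ^ 4 + X ^ 3 - X + 1) ∧
    (¬ ∃ L : Polynomial ℤ, IsLittlewood L ∧
      (X ^ 11 + X ^ 10 + X ^ 9 + X ^ 8 + X ^ 7 + X ^ 5 + X ^ 4 + X ^ 3 + 1 : Polynomial ℤ) ∣ L) ∧
    (∃ L : Polynomial ℤ, IsLittlewood L ∧ (X ^ 4 + X ^ 3 + 1 : Polynomial ℤ) ∣ L) ∧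
    (∃ L : Polynomial ℤ, IsLittlewood L ∧ (X ^ 5 - X ^ 4 + X ^ 3 - X + 1 : Polynomial ℤ) ∣ L) := by
  refine ⟨?_, by ring, ?_, ?_, ?_⟩
  · have h := NewmanAux.newman_ofL [1, 0, 0, 1, 1, 1, 0, 1, 1, 1, 1, 1] (by simp) (by simp)
    have e : NewmanAux.ofL [1, 0, 0, 1, 1, 1, 0, 1, 1, 1, 1, 1] =
        (X ^ 11 + X ^ 10 + X ^ 9 + X ^ 8 + X ^ 7 + X ^ 5 + X ^ 4 + X ^ 3 + 1 : ℤ[X]) := by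
      simp only [NewmanAux.ofL, C_0, C_1]
      ring
    rwa [e] at h
  · rintro ⟨L, hL, K, hK⟩
    refine NewmanAux.no_littlewood L ((X ^ 2 + X + 1) * K) hL ?_
    rw [hK]; ring
  · refine ⟨NewmanAux.ofL (NewmanAux.mulL [1, 0, 0, 1, 1]
      [-1, 1, -1, 2, -1, 1, 0, 0, 1, 0, 1]),
      NewmanAux.littlewood_ofL _ (by decide +kernel) (by decide +kernel), ?_⟩
    rw [NewmanAux.ofL_mul]
    apply dvd_mul_of_dvd_left
    apply dvd_of_eq
    simp only [NewmanAux.ofL, C_0, C_1]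
    ring
  · refine ⟨NewmanAux.ofL (NewmanAux.mulL [1, -1, 0, 1, -1, 1]
      [1, 0, 1, 1, 1, 0, 1, 1, 0, -1, 0, 1, 0, -2, -1, 1, 1, -1, 0, 2, 2, 1, 1, 2, 2, 1]),
      NewmanAux.littlewood_ofL _ (by decide +kernel) (by decide +kernel), ?_⟩
    rw [NewmanAux.ofL_mul]
    apply dvd_mul_of_dvd_left
    apply dvd_of_eq
    simp only [NewmanAux.ofL, C_0, C_1, C_neg]
    ring
end

section
/- The polynomial p(X) = X^3 - X + 1 divides the Newman polynomial X^5 + X^4 + 1, and its reciprocal p*(X) = X^3 - X^2 + 1 divides the Newman polynomial X^5 + X + 1; however, the product p(X)·p*(X) = X^6 - X^5 - X^4 + 3X^3 - X^2 - X + 1 divides no Newman polynomial. -/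
open Polynomial

/-- Polynomial from a coefficient list (lowest degree first). -/
noncomputable def toPoly : List ℤ → Polynomial ℤ
  | [] => 0
  | a :: l => C a + X * toPoly l

def addL : List ℤ → List ℤ → List ℤ
  | [], m => m
  | a :: l, [] => a :: l
  | a :: l, b :: m => (a + b) :: addL l m

def mulL : List ℤ → List ℤ → List ℤ
  | [], _ => []
  | a :: l, m => addL (m.map (fun b => a * b)) (0 :: mulL l m)

def posL : List ℤ → ℤ
  | [] => 0
  | a :: l => max a 0 + posL l

def negL : List ℤ → ℤ
  | [] => 0
  | a :: l => max (-a) 0 + negL l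

theorem toPoly_addL (l m : List ℤ) : toPoly (addL l m) = toPoly l + toPoly m := by
  induction l generalizing m with
  | nil => simp [addL, toPoly]
  | cons a l ih =>
    cases m with
    | nil => simp [addL, toPoly]
    | cons b m => simp only [addL, toPoly, ih, C_add]; ring

theorem toPoly_smul (a : ℤ) (m : List ℤ) :
    toPoly (m.map (fun b => a * b)) = C a * toPoly m := by
  induction m with
  | nil => simp [toPoly]
  | cons b m ih => simp only [List.map_cons, toPoly, ih, C_mul]; ring

theorem toPoly_mulL (l m : List ℤ) : toPoly (mulL l m) = toPoly l * toPoly m := by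
  induction l with
  | nil => simp [mulL, toPoly]
  | cons a l ih =>
    simp only [mulL, toPoly_addL, toPoly_smul, toPoly, ih, C_0]; ring

theorem toPoly_rep (k : ℕ) (a : ℤ) :
    toPoly (List.replicate k 0 ++ [a]) = X ^ k * C a := by
  induction k with
  | zero => simp [toPoly]
  | succ k ih => simp only [List.replicate_succ, List.cons_append, toPoly, ih, C_0]; ring

theorem posL_nonneg (l : List ℤ) : 0 ≤ posL l := by
  induction l with
  | nil => simp [posL]
  | cons a l ih => simp only [posL]; have := le_max_right a 0; omega

theorem negL_nonneg (l : List ℤ) : 0 ≤ negL l := by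
  induction l with
  | nil => simp [negL]
  | cons a l ih => simp only [negL]; have := le_max_right (-a) 0; omega

theorem coeff_newman_bound (N : Polynomial ℤ) (hN : ∀ i, N.coeff i = 0 ∨ N.coeff i = 1)
    (l : List ℤ) (n : ℕ) :
    -negL l ≤ (toPoly l * N).coeff n ∧ (toPoly l * N).coeff n ≤ posL l := by
  induction l generalizing n with
  | nil => simp [toPoly, negL, posL]
  | cons a l ih =>
    have h1 : (toPoly (a :: l) * N).coeff n = a * N.coeff n + (X * (toPoly l * N)).coeff n := by
      simp only [toPoly, add_mul, coeff_add, coeff_C_mul, mul_assoc]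
    rw [h1]
    have h2 : -negL l ≤ (X * (toPoly l * N)).coeff n ∧
        (X * (toPoly l * N)).coeff n ≤ posL l := by
      cases n with
      | zero => simp [posL_nonneg, negL_nonneg]
      | succ n => rw [coeff_X_mul]; exact ih n
    simp only [negL, posL]
    rcases hN n with h | h <;> rw [h] <;> omega

theorem coeff_abs_bound (R : Polynomial ℤ) (D : ℤ) (hR : ∀ i, |R.coeff i| ≤ D)
    (l : List ℤ) (n : ℕ) :
    |(toPoly l * R).coeff n| ≤ (posL l + negL l) * D := by
  have hD : 0 ≤ D := (abs_nonneg _).trans (hR 0)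
  induction l generalizing n with
  | nil => simp [toPoly, negL, posL]
  | cons a l ih =>
    have h1 : (toPoly (a :: l) * R).coeff n = a * R.coeff n + (X * (toPoly l * R)).coeff n := by
      simp only [toPoly, add_mul, coeff_add, coeff_C_mul, mul_assoc]
    rw [h1]
    have h2 : |(X * (toPoly l * R)).coeff n| ≤ (posL l + negL l) * D := by
      cases n with
      | zero =>
        simp only [mul_coeff_zero, coeff_X_zero, zero_mul, abs_zero]
        exact mul_nonneg (add_nonneg (posL_nonneg l) (negL_nonneg l)) hD
      | succ n => rw [coeff_X_mul]; exact ih n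
    have h3 : |a * R.coeff n| ≤ |a| * D := by
      rw [abs_mul]; exact mul_le_mul_of_nonneg_left (hR n) (abs_nonneg a)
    have h4 : max a 0 + max (-a) 0 = |a| := by
      rcases le_total 0 a with h | h
      · rw [abs_of_nonneg h]; omega
      · rw [abs_of_nonpos h]; omega
    simp only [negL, posL]
    calc _ ≤ |a * R.coeff n| + |(X * (toPoly l * R)).coeff n| := abs_add_le _ _
      _ ≤ |a| * D + (posL l + negL l) * D := add_le_add h3 h2
      _ = _ := by rw [← h4]; ring

/-- A scaled truncation of the two-sided inverse of the product polynomial. -/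
def greenL : List ℤ :=
  [
   -24, -58, -70, -46, 11, 82, 128, 117, 34, -93, -211, -243, -153, 61, 300, 458, 390, 99,
   -372, -744, -866, -464, 240, 1159, 1553, 1407, 124, -1266, -2889, -2726, -1841, 1553,
   3611, 6336, 3611, 1553, -1841, -2726, -2889, -1266, 124, 1407, 1553, 1159, 240, -464,
   -866, -744, -372, 99, 390, 458, 300, 61, -153, -243, -211, -93, 34, 117, 128, 82, 11,
   -46, -70, -58, -24]

def prodL : List ℤ := [1, -1, -1, 3, -1, -1, 1]

def errL : List ℤ := addL (mulL greenL prodL) (List.replicate 36 0 ++ [-5000])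

def diffL : List ℤ := mulL greenL [1, -1]

theorem errL_bound : posL errL + negL errL = 282 := by decide +kernel

theorem diffL_pos : posL diffL = 18750 := by decide +kernel

theorem diffL_neg : negL diffL = 18750 := by decide +kernel

/-- Consecutive quotient coefficients differ by at most 3. -/
theorem diff_bound (N Q : Polynomial ℤ) (hN : ∀ i, N.coeff i = 0 ∨ N.coeff i = 1)
    (hQ : N = toPoly prodL * Q) (n : ℕ) : |((1 - X) * Q).coeff n| ≤ 3 := by
  set R := (1 - X) * Q with hRdef
  have key : toPoly diffL * N = C 5000 * R * X ^ 36 + toPoly errL * R := by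
    rw [diffL, errL, toPoly_addL, toPoly_mulL, toPoly_mulL, toPoly_rep, hQ, hRdef]
    have : toPoly [1, -1] = 1 - X := by simp [toPoly]; ring
    rw [this, C_neg]; ring
  obtain ⟨m, hm⟩ : ∃ m, ∀ i, |R.coeff i| ≤ |R.coeff m| := by
    obtain ⟨m, -, hm⟩ := Finset.exists_max_image (Finset.range (R.natDegree + 1))
      (fun i => |R.coeff i|) ⟨0, by simp⟩
    refine ⟨m, fun i => ?_⟩
    by_cases hi : i < R.natDegree + 1
    · exact hm i (by simpa using hi)
    · rw [coeff_eq_zero_of_natDegree_lt (by omega)]; simp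
  have h1 := coeff_newman_bound N hN diffL (m + 36)
  have h2 := coeff_abs_bound R _ hm errL (m + 36)
  rw [key, coeff_add, coeff_mul_X_pow, coeff_C_mul, diffL_pos, diffL_neg] at h1
  rw [errL_bound] at h2
  have h3 := hm n
  generalize (toPoly errL * R).coeff (m + 36) = e at *
  generalize R.coeff m = r at *
  rcases abs_cases r with h | h <;> rcases abs_cases e with hh | hh <;> omega

abbrev St := ℤ × ℤ × ℤ × ℤ × ℤ × ℤ

def nextSt : St → ℤ → St
  | (a, b, c, d, e, f), t => (t + a + b - 3 * c + d + e - f, a, b, c, d, e)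

def eqSt : St → St → Bool
  | (a, b, c, d, e, f), (a₂, b₂, c₂, d₂, e₂, f₂) =>
    a == a₂ && (b == b₂ && (c == c₂ && (d == d₂ && (e == e₂ && f == f₂))))

theorem eqSt_iff (s t : St) : eqSt s t = true ↔ s = t := by
  obtain ⟨a, b, c, d, e, f⟩ := s
  obtain ⟨a₂, b₂, c₂, d₂, e₂, f₂⟩ := t
  simp [eqSt]

def okSt (s t : St) : Bool := decide (t.1 - s.1 ≤ 3) && decide (s.1 - t.1 ≤ 3)

def memSt (s : St) : List St → Bool
  | [] => false
  | t :: l => eqSt s t || memSt s l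

theorem memSt_iff (s : St) (l : List St) : memSt s l = true ↔ s ∈ l := by
  induction l with
  | nil => simp [memSt]
  | cons t l ih => simp [memSt, ih, eqSt_iff]

/-- Depth-first exploration: work list, then visited list. -/
def explore : ℕ → List St → List St → List St
  | 0, _, vis => vis
  | _ + 1, [], vis => vis
  | k + 1, s :: todo, vis =>
    match memSt s vis with
    | true => explore k todo vis
    | false =>
      let t0 := nextSt s 0
      let t1 := nextSt s 1
      let todo := match okSt s t0 with
        | true => t0 :: todo
        | false => todo
      let todo := match okSt s t1 with
        | true => t1 :: todo
        | false => todo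
      explore k todo (s :: vis)

def goodSt (S : List St) : Bool :=
  memSt (1, 0, 0, 0, 0, 0) S && (!(memSt (0, 0, 0, 0, 0, 0) S) &&
    S.all (fun s => (!(okSt s (nextSt s 0)) || memSt (nextSt s 0) S) &&
      (!(okSt s (nextSt s 1)) || memSt (nextSt s 1) S)))

theorem exists_good : ∃ S, goodSt S = true :=
  ⟨explore 1000 [(1, 0, 0, 0, 0, 0)] [], by decide +kernel⟩

theorem no_newman (N Q : Polynomial ℤ) (hN : ∀ i, N.coeff i = 0 ∨ N.coeff i = 1)
    (h0 : N.coeff 0 = 1) (hQ : N = toPoly prodL * Q) : False := by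
  obtain ⟨S, hS⟩ := exists_good
  simp only [goodSt, Bool.and_eq_true, Bool.not_eq_true', List.all_eq_true, memSt_iff,
    Bool.or_eq_true] at hS
  obtain ⟨hs1, hs0, hstep⟩ := hS
  have hs0n : ((0, 0, 0, 0, 0, 0) : St) ∉ S := by
    rw [← memSt_iff, hs0]; simp
  have hP : toPoly prodL = X ^ 6 - X ^ 5 - X ^ 4 + 3 * X ^ 3 - X ^ 2 - X + 1 := by
    simp only [prodL, toPoly, C_neg, C_1, show (C (3 : ℤ)) = (3 : Polynomial ℤ) from rfl]; ring
  set c : ℕ → ℤ := fun k => (Q * X ^ 5).coeff k with hc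
  have hc5 : ∀ k, c (k + 5) = Q.coeff k := fun k => coeff_mul_X_pow Q 5 k
  have hlow : ∀ k < 5, c k = 0 := fun k hk => by
    simp only [hc, coeff_mul_X_pow', if_neg (not_le.mpr hk)]
  have hq0 : Q.coeff 0 = 1 := by
    rw [hQ, mul_coeff_zero, hP] at h0
    simpa using h0
  have hdiff : ∀ k, |c (k + 6) - c (k + 5)| ≤ 3 := fun k => by
    have h := diff_bound N Q hN hQ (k + 1)
    rw [sub_mul, one_mul, coeff_sub, coeff_X_mul] at h
    rw [show k + 6 = (k + 1) + 5 from rfl, hc5, hc5]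
    exact h
  have hrec : ∀ k, c (k + 6) = N.coeff (k + 1) + c (k + 5) + c (k + 4) - 3 * c (k + 3)
      + c (k + 2) + c (k + 1) - c k := fun k => by
    have h : (Q * X ^ 5) * X ^ 6 - (Q * X ^ 5) * X ^ 5 - (Q * X ^ 5) * X ^ 4
        + C 3 * ((Q * X ^ 5) * X ^ 3) - (Q * X ^ 5) * X ^ 2 - (Q * X ^ 5) * X ^ 1
        + (Q * X ^ 5) = N * X ^ 5 := by
      rw [hQ, hP, show (C (3 : ℤ)) = (3 : Polynomial ℤ) from rfl]; ring
    have hh := congrArg (fun p => p.coeff (k + 6)) h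
    simp only [coeff_add, coeff_sub, coeff_C_mul] at hh
    rw [coeff_mul_X_pow _ 6 k, show k + 6 = (k + 1) + 5 from rfl, coeff_mul_X_pow _ 5 (k + 1),
      coeff_mul_X_pow N 5 (k + 1),
      show k + 1 + 5 = (k + 2) + 4 from rfl, coeff_mul_X_pow _ 4 (k + 2),
      show k + 2 + 4 = (k + 3) + 3 from rfl, coeff_mul_X_pow _ 3 (k + 3),
      show k + 3 + 3 = (k + 4) + 2 from rfl, coeff_mul_X_pow _ 2 (k + 4),
      show k + 4 + 2 = (k + 5) + 1 from rfl, coeff_mul_X_pow _ 1 (k + 5)] at hh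
    simp only [hc]
    linarith
  have hmem : ∀ k, ((c (k + 5), c (k + 4), c (k + 3), c (k + 2), c (k + 1), c k) : St) ∈ S := by
    intro k
    induction k with
    | zero =>
      have e5 : c (0 + 5) = 1 := by rw [hc5, hq0]
      rw [e5, hlow (0 + 4) (by omega), hlow (0 + 3) (by omega), hlow (0 + 2) (by omega),
        hlow (0 + 1) (by omega), hlow 0 (by omega)]
      exact hs1
    | succ k ih =>
      have hd := abs_le.mp (hdiff k)
      have hn : ∀ t, N.coeff (k + 1) = t →
          nextSt (c (k + 5), c (k + 4), c (k + 3), c (k + 2), c (k + 1), c k) t =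
          (c (k + 6), c (k + 5), c (k + 4), c (k + 3), c (k + 2), c (k + 1)) := by
        intro t ht
        simp only [nextSt, hrec k, ht]
      have hok : okSt (c (k + 5), c (k + 4), c (k + 3), c (k + 2), c (k + 1), c k)
          (c (k + 6), c (k + 5), c (k + 4), c (k + 3), c (k + 2), c (k + 1)) = true := by
        simp only [okSt, Bool.and_eq_true, decide_eq_true_eq]
        omega
      obtain ⟨g0, g1⟩ := hstep _ ih
      show (c (k + 6), c (k + 5), c (k + 4), c (k + 3), c (k + 2), c (k + 1)) ∈ S
      rcases hN (k + 1) with ht | ht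
      · rw [hn 0 ht, hok] at g0
        simpa using g0
      · rw [hn 1 ht, hok] at g1
        simpa using g1
  have hz : ∀ j, c (Q.natDegree + 6 + j) = 0 := fun j => by
    rw [show Q.natDegree + 6 + j = (Q.natDegree + 1 + j) + 5 by omega, hc5]
    exact coeff_eq_zero_of_natDegree_lt (by omega)
  have hfin := hmem (Q.natDegree + 6)
  rw [hz 5, hz 4, hz 3, hz 2, hz 1, show c (Q.natDegree + 6) = 0 from hz 0] at hfin
  exact hs0n hfin

/-- `p = X^3 - X + 1` divides the Newman polynomial `X^5 + X^4 + 1`, its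
reciprocal `p* = X^3 - X^2 + 1` divides the Newman polynomial `X^5 + X + 1`, but
the product `p · p* = X^6 - X^5 - X^4 + 3X^3 - X^2 - X + 1` divides no Newman
polynomial. -/
theorem product_with_reciprocal_no_newman :
    ((X ^ 3 - X + 1 : Polynomial ℤ) ∣ (X ^ 5 + X ^ 4 + 1) ∧
      IsNewman (X ^ 5 + X ^ 4 + 1 : Polynomial ℤ)) ∧
    ((X ^ 3 - X ^ 2 + 1 : Polynomial ℤ) ∣ (X ^ 5 + X + 1) ∧
      IsNewman (X ^ 5 + X + 1 : Polynomial ℤ)) ∧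
    ((X ^ 3 - X + 1) * (X ^ 3 - X ^ 2 + 1) : Polynomial ℤ) =
      X ^ 6 - X ^ 5 - X ^ 4 + 3 * X ^ 3 - X ^ 2 - X + 1 ∧
    ¬ ∃ N : Polynomial ℤ, IsNewman N ∧
      ((X ^ 3 - X + 1) * (X ^ 3 - X ^ 2 + 1) : Polynomial ℤ) ∣ N := by
  have hprod : ((X ^ 3 - X + 1) * (X ^ 3 - X ^ 2 + 1) : Polynomial ℤ) =
      X ^ 6 - X ^ 5 - X ^ 4 + 3 * X ^ 3 - X ^ 2 - X + 1 := by ring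
  refine ⟨⟨⟨X ^ 2 + X + 1, by ring⟩, ?_, ?_⟩, ⟨⟨X ^ 2 + X + 1, by ring⟩, ?_, ?_⟩, hprod, ?_⟩
  · intro i
    simp only [coeff_add, coeff_X_pow, coeff_one, Set.mem_insert_iff, Set.mem_singleton_iff]
    split_ifs <;> first | omega | simp
  · simp [coeff_X_pow, coeff_one]
  · intro i
    simp only [coeff_add, coeff_X_pow, coeff_X, coeff_one, Set.mem_insert_iff,
      Set.mem_singleton_iff]
    split_ifs <;> first | omega | simp
  · simp [coeff_X_pow, coeff_one]
  · rintro ⟨N, ⟨hN, h0⟩, Q, hQ⟩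
    refine no_newman N Q (fun i => by simpa using hN i) h0 ?_
    rw [hQ, hprod]
    congr 1
    simp only [prodL, toPoly, C_neg, C_1, show (C (3 : ℤ)) = (3 : Polynomial ℤ) from rfl]; ring
end

section
/- The Borwein polynomial P(X) = (X^2 + X + 1)·(X^3 - X + 1)^2 = X^8 + X^7 - X^6 + X^4 + X^3 - X + 1 divides no Newman polynomial, but P(X) divides some Littlewood polynomial. -/
open Polynomial

/-- Normalised pairs `(∑ c (m-i) b^(-i), ∑ i c (m-i) b^(-i))` for digits `c` in `{0,1}`, where `b = -t`. -/
inductive Reach (t : ℝ) : ℝ → ℝ → Prop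
  | zero : Reach t 0 0
  | step (v w c v2 w2 : ℝ) : Reach t v w → (c = 0 ∨ c = 1) → v = -(t * v2) - c →
      w = t * v2 - t * w2 → Reach t v2 w2

theorem Reach.inv {t v w : ℝ} (h : Reach t v w) :
    Reach t (-(t * v) - 0) (t * v - t * w) ∨ Reach t (-(t * v) - 1) (t * v - t * w) := by
  cases h with
  | zero => left; simpa using Reach.zero (t := t)
  | step v0 w0 c v2 w2 h hc hv hw =>
    subst hv hw
    rcases hc with rfl | rfl
    · left; exact h
    · right; exact h

theorem Reach.box {t v w : ℝ} (ht : t ^ 3 - t - 1 = 0) (h1 : 1 < t) (h : Reach t v w) :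
    -t ^ 2 ≤ v ∧ v ≤ t ∧ -(t ^ 2 + 2 * t + 2) ≤ w ∧ w ≤ 2 * t ^ 2 + 2 * t := by
  have h0 : 0 < t := by linarith
  induction h with
  | zero => refine ⟨?_, ?_, ?_, ?_⟩ <;> nlinarith
  | step v w c v2 w2 _ hc hv hw ih =>
    obtain ⟨a1, a2, a3, a4⟩ := ih
    have c0 : 0 ≤ c := by rcases hc with rfl | rfl <;> norm_num
    have c1 : c ≤ 1 := by rcases hc with rfl | rfl <;> norm_num
    refine ⟨?_, ?_, ?_, ?_⟩ <;> refine le_of_mul_le_mul_left ?_ h0 <;> ring_nf <;> nlinarith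

/-- Reachability of a pair of elements of `ℤ[t]`, in coordinates with respect to `1, t, t^2`. -/
def RZ (t : ℝ) (a0 a1 a2 b0 b1 b2 : ℤ) : Prop :=
  Reach t (a0 + a1 * t + a2 * t ^ 2) (b0 + b1 * t + b2 * t ^ 2)

theorem RZ.inv {t : ℝ} {a0 a1 a2 b0 b1 b2 : ℤ} (ht : t ^ 3 - t - 1 = 0)
    (h : RZ t a0 a1 a2 b0 b1 b2) :
    RZ t (-a2) (-(a0 + a2)) (-a1) (a2 - b2) (a0 + a2 - (b0 + b2)) (a1 - b1) ∨
    RZ t (-a2 - 1) (-(a0 + a2)) (-a1) (a2 - b2) (a0 + a2 - (b0 + b2)) (a1 - b1) := by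
  have e : ∀ x y z : ℝ, t * (x + y * t + z * t ^ 2) = z + (x + z) * t + y * t ^ 2 := by
    intro x y z
    linear_combination z * ht
  unfold RZ at *
  refine (Reach.inv h).imp (fun h => ?_) (fun h => ?_) <;>
  · rw [e, e] at h
    convert h using 1 <;> push_cast <;> ring

theorem leaf {t : ℝ} {a0 a1 a2 b0 b1 b2 : ℤ} (ht : t ^ 3 - t - 1 = 0) (h1 : 1 < t)
    (h : RZ t a0 a1 a2 b0 b1 b2)
    (hf : -t ^ 2 ≤ a0 + a1 * t + a2 * t ^ 2 → a0 + a1 * t + a2 * t ^ 2 ≤ t →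
      -(t ^ 2 + 2 * t + 2) ≤ b0 + b1 * t + b2 * t ^ 2 →
      b0 + b1 * t + b2 * t ^ 2 ≤ 2 * t ^ 2 + 2 * t → False) : False := by
  obtain ⟨a, b, c, d⟩ := Reach.box ht h1 h
  exact hf a b c d

theorem dead {t : ℝ} (ht : t ^ 3 - t - 1 = 0) (hgt : 1 < t)
    (l1 : 1.32471795 ≤ t) (u1 : t ≤ 1.32471796) (l2 : 1.75487766 ≤ t ^ 2)
    (u2 : t ^ 2 ≤ 1.75487767) (h : Reach t (-1) 0) : False := by
  replace h : RZ t (-1) 0 0 0 0 0 := by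
    unfold RZ
    convert h using 1 <;> push_cast <;> ring
  rcases (h.inv ht : RZ t 0 1 0 0 (-1) 0 ∨ RZ t (-1) 1 0 0 (-1) 0) with h | h
  · rcases (h.inv ht : RZ t 0 0 (-1) 0 0 2 ∨ RZ t (-1) 0 (-1) 0 0 2) with h | h
    on_goal 2 => exact leaf ht hgt h (by intros; push_cast at *; linarith)
    rcases (h.inv ht : RZ t 1 1 0 (-3) (-3) 0 ∨ RZ t 0 1 0 (-3) (-3) 0) with h | h
    · exact leaf ht hgt h (by intros; push_cast at *; linarith)
    · exact leaf ht hgt h (by intros; push_cast at *; linarith)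
  · rcases (h.inv ht : RZ t 0 1 (-1) 0 (-1) 2 ∨ RZ t (-1) 1 (-1) 0 (-1) 2) with h | h
    · rcases (h.inv ht : RZ t 1 1 (-1) (-3) (-3) 2 ∨ RZ t 0 1 (-1) (-3) (-3) 2) with h | h
      · rcases (h.inv ht : RZ t 1 0 (-1) (-3) 1 4 ∨ RZ t 0 0 (-1) (-3) 1 4) with h | h
        · rcases (h.inv ht : RZ t 1 0 0 (-5) (-1) (-1) ∨ RZ t 0 0 0 (-5) (-1) (-1)) with h | h
          · exact leaf ht hgt h (by intros; push_cast at *; linarith)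
          · exact leaf ht hgt h (by intros; push_cast at *; linarith)
        · rcases (h.inv ht : RZ t 1 1 0 (-5) (-2) (-1) ∨ RZ t 0 1 0 (-5) (-2) (-1)) with h | h
          · exact leaf ht hgt h (by intros; push_cast at *; linarith)
          · exact leaf ht hgt h (by intros; push_cast at *; linarith)
      · rcases (h.inv ht : RZ t 1 1 (-1) (-3) 0 4 ∨ RZ t 0 1 (-1) (-3) 0 4) with h | h
        · rcases (h.inv ht : RZ t 1 0 (-1) (-5) (-1) 1 ∨ RZ t 0 0 (-1) (-5) (-1) 1) with h | h
          · rcases (h.inv ht : RZ t 1 0 0 (-2) 4 1 ∨ RZ t 0 0 0 (-2) 4 1) with h | h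
            · rcases (h.inv ht : RZ t 0 (-1) 0 (-1) 2 (-4) ∨ RZ t (-1) (-1) 0 (-1) 2 (-4)) with h | h
              on_goal 2 => exact leaf ht hgt h (by intros; push_cast at *; linarith)
              rcases (h.inv ht : RZ t 0 0 1 4 5 (-3) ∨ RZ t (-1) 0 1 4 5 (-3)) with h | h
              · exact leaf ht hgt h (by intros; push_cast at *; linarith)
              rcases (h.inv ht : RZ t (-1) 0 0 4 (-1) (-5) ∨ RZ t (-2) 0 0 4 (-1) (-5)) with h | h
              on_goal 2 => exact leaf ht hgt h (by intros; push_cast at *; linarith)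
              rcases (h.inv ht : RZ t 0 1 0 5 0 1 ∨ RZ t (-1) 1 0 5 0 1) with h | h
              · exact leaf ht hgt h (by intros; push_cast at *; linarith)
              · exact leaf ht hgt h (by intros; push_cast at *; linarith)
            · rcases (h.inv ht : RZ t 0 0 0 (-1) 1 (-4) ∨ RZ t (-1) 0 0 (-1) 1 (-4)) with h | h
              · exact leaf ht hgt h (by intros; push_cast at *; linarith)
              · exact leaf ht hgt h (by intros; push_cast at *; linarith)
          · rcases (h.inv ht : RZ t 1 1 0 (-2) 3 1 ∨ RZ t 0 1 0 (-2) 3 1) with h | h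
            · exact leaf ht hgt h (by intros; push_cast at *; linarith)
            rcases (h.inv ht : RZ t 0 0 (-1) (-1) 1 (-2) ∨ RZ t (-1) 0 (-1) (-1) 1 (-2)) with h | h
            on_goal 2 => exact leaf ht hgt h (by intros; push_cast at *; linarith)
            rcases (h.inv ht : RZ t 1 1 0 1 2 (-1) ∨ RZ t 0 1 0 1 2 (-1)) with h | h
            · exact leaf ht hgt h (by intros; push_cast at *; linarith)
            rcases (h.inv ht : RZ t 0 0 (-1) 1 0 (-1) ∨ RZ t (-1) 0 (-1) 1 0 (-1)) with h | h
            on_goal 2 => exact leaf ht hgt h (by intros; push_cast at *; linarith)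
            rcases (h.inv ht : RZ t 1 1 0 0 (-1) 0 ∨ RZ t 0 1 0 0 (-1) 0) with h | h
            · exact leaf ht hgt h (by intros; push_cast at *; linarith)
            rcases (h.inv ht : RZ t 0 0 (-1) 0 0 2 ∨ RZ t (-1) 0 (-1) 0 0 2) with h | h
            on_goal 2 => exact leaf ht hgt h (by intros; push_cast at *; linarith)
            rcases (h.inv ht : RZ t 1 1 0 (-3) (-3) 0 ∨ RZ t 0 1 0 (-3) (-3) 0) with h | h
            · exact leaf ht hgt h (by intros; push_cast at *; linarith)
            · exact leaf ht hgt h (by intros; push_cast at *; linarith)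
        · rcases (h.inv ht : RZ t 1 1 (-1) (-5) (-2) 1 ∨ RZ t 0 1 (-1) (-5) (-2) 1) with h | h
          · rcases (h.inv ht : RZ t 1 0 (-1) (-2) 4 3 ∨ RZ t 0 0 (-1) (-2) 4 3) with h | h
            · exact leaf ht hgt h (by intros; push_cast at *; linarith)
            · exact leaf ht hgt h (by intros; push_cast at *; linarith)
          · rcases (h.inv ht : RZ t 1 1 (-1) (-2) 3 3 ∨ RZ t 0 1 (-1) (-2) 3 3) with h | h
            · exact leaf ht hgt h (by intros; push_cast at *; linarith)
            · exact leaf ht hgt h (by intros; push_cast at *; linarith)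
    · rcases (h.inv ht : RZ t 1 2 (-1) (-3) (-4) 2 ∨ RZ t 0 2 (-1) (-3) (-4) 2) with h | h
      · exact leaf ht hgt h (by intros; push_cast at *; linarith)
      rcases (h.inv ht : RZ t 1 1 (-2) (-3) 0 6 ∨ RZ t 0 1 (-2) (-3) 0 6) with h | h
      · exact leaf ht hgt h (by intros; push_cast at *; linarith)
      · exact leaf ht hgt h (by intros; push_cast at *; linarith)

theorem exists_root : ∃ t : ℝ, t ^ 3 - t - 1 = 0 ∧ 1.32471795 ≤ t ∧ t ≤ 1.32471796 := by
  have hc : ContinuousOn (fun t : ℝ => t ^ 3 - t - 1) (Set.Icc 1.32471795 1.32471796) := by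
    fun_prop
  have := intermediate_value_Icc (by norm_num) hc
  obtain ⟨t, ht, h⟩ := this (show (0 : ℝ) ∈ _ by constructor <;> norm_num)
  exact ⟨t, h, ht.1, ht.2⟩

/-- Partial sums of a `{0,1}` sequence are reachable after normalisation. -/
theorem reach_partial {t : ℝ} (h0 : t ≠ 0) (c : ℕ → ℝ) (hc : ∀ i, c i = 0 ∨ c i = 1) (m : ℕ) :
    Reach t ((∑ j ∈ Finset.range m, c j * (-t) ^ j) / (-t) ^ m)
      ((∑ j ∈ Finset.range m, ((m : ℝ) - j) * (c j * (-t) ^ j)) / (-t) ^ m) := by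
  induction m with
  | zero => simpa using Reach.zero (t := t)
  | succ m ih =>
    have hb : (-t) ^ m ≠ 0 := pow_ne_zero _ (neg_ne_zero.mpr h0)
    have key : ∑ j ∈ Finset.range m, (((m + 1 : ℕ) : ℝ) - j) * (c j * (-t) ^ j) =
        ∑ j ∈ Finset.range m, ((m : ℝ) - j) * (c j * (-t) ^ j) +
          ∑ j ∈ Finset.range m, c j * (-t) ^ j := by
      rw [← Finset.sum_add_distrib]
      refine Finset.sum_congr rfl fun j _ => ?_
      push_cast
      ring
    refine Reach.step _ _ (c m) _ _ ih (hc m) ?_ ?_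
    · rw [Finset.sum_range_succ, pow_succ]
      field_simp
      ring
    · rw [Finset.sum_range_succ, Finset.sum_range_succ, key, pow_succ]
      push_cast
      field_simp
      ring

theorem no_newman_s15 (N : Polynomial ℤ) (hN : IsNewman N)
    (hd : ((X ^ 3 - X + 1) ^ 2 : Polynomial ℤ) ∣ N) : False := by
  obtain ⟨t, ht, l1, u1⟩ := exists_root
  have h1 : 1 < t := by linarith
  have h0 : t ≠ 0 := by linarith
  refine dead ht h1 l1 u1 (by nlinarith) (by nlinarith) ?_
  obtain ⟨K, rfl⟩ := hd
  set N : Polynomial ℤ := (X ^ 3 - X + 1) ^ 2 * K with hNdef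
  have hN0 : N ≠ 0 := by
    intro h
    have := hN.2
    rw [h] at this
    simp at this
  have e1 : aeval (-t) N = 0 := by
    have : (-t) ^ 3 - (-t) + 1 = 0 := by linear_combination -ht
    simp only [hNdef, map_mul, map_pow, map_add, map_sub, aeval_X, map_one, this]
    ring
  have e2 : aeval (-t) (derivative N) = 0 := by
    have : (-t) ^ 3 - (-t) + 1 = 0 := by linear_combination -ht
    simp only [hNdef, derivative_mul, derivative_pow, map_mul, map_pow, map_add, map_sub, aeval_X,
      map_one, this]
    simp
  have s1 : ∑ j ∈ Finset.range (N.natDegree + 1), (N.coeff j : ℝ) * (-t) ^ j = 0 := by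
    rw [← e1, aeval_eq_sum_range]
    simp
  have s2 : ∑ j ∈ Finset.range (N.natDegree + 1), (j : ℝ) * ((N.coeff j : ℝ) * (-t) ^ j) = 0 := by
    have e3 : aeval (-t) (X * derivative N) = 0 := by rw [map_mul, e2, mul_zero]
    have h3 : (X * derivative N).natDegree < N.natDegree + 1 := by
      refine lt_of_le_of_lt natDegree_mul_le ?_
      have := natDegree_derivative_le N
      by_cases hz : N.natDegree = 0
      · exfalso
        rw [hz] at s1
        have := hN.2
        simp [this] at s1
      · rw [natDegree_X]
        omega
    rw [aeval_eq_sum_range' h3] at e3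
    rw [← e3]
    refine Finset.sum_congr rfl fun j _ => ?_
    rcases j with _ | j
    · simp
    · rw [coeff_X_mul, coeff_derivative]
      simp
      ring
  have hc : ∀ i, (N.coeff i : ℝ) = 0 ∨ (N.coeff i : ℝ) = 1 := by
    intro i
    rcases hN.1 i with h | h
    · left; rw [h]; simp
    · right; rw [h]; simp
  have hl : (N.coeff N.natDegree : ℝ) = 1 := by
    rcases hc N.natDegree with h | h
    · exfalso
      have : N.coeff N.natDegree = 0 := by exact_mod_cast h
      exact hN0 (leadingCoeff_eq_zero.mp this)
    · exact h
  have hR := reach_partial h0 (fun i => (N.coeff i : ℝ)) hc N.natDegree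
  have hb : (-t) ^ N.natDegree ≠ 0 := pow_ne_zero _ (neg_ne_zero.mpr h0)
  rw [Finset.sum_range_succ, hl] at s1 s2
  have r1 : ∑ j ∈ Finset.range N.natDegree, (N.coeff j : ℝ) * (-t) ^ j =
      -(-t) ^ N.natDegree := by linarith
  have r2 : ∑ j ∈ Finset.range N.natDegree,
      ((N.natDegree : ℝ) - j) * ((N.coeff j : ℝ) * (-t) ^ j) = 0 := by
    simp only [sub_mul, Finset.sum_sub_distrib, ← Finset.mul_sum, r1]
    linear_combination -s2
  simp only [r1, r2] at hR
  convert hR using 1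
  · field_simp
  · simp

theorem littlewood_exists : ∃ L : Polynomial ℤ, IsLittlewood L ∧
    (X ^ 8 + X ^ 7 - X ^ 6 + X ^ 4 + X ^ 3 - X + 1 : Polynomial ℤ) ∣ L := by
  refine ⟨X ^ 41 + X ^ 40 - X ^ 39 + X ^ 38 + X ^ 37 - X ^ 36 + X ^ 35 - X ^ 34 - X ^ 33 - X ^ 32 - X ^ 31 + X ^ 30 + X ^ 29 + X ^ 28 + X ^ 27 + X ^ 26 - X ^ 25 + X ^ 24 - X ^ 23 + X ^ 22 + X ^ 21 - X ^ 20 + X ^ 19 + X ^ 18 + X ^ 17 + X ^ 16 + X ^ 15 - X ^ 14 + X ^ 13 - X ^ 12 + X ^ 11 + X ^ 10 - X ^ 9 - X ^ 8 + X ^ 7 + X ^ 6 + X ^ 5 - X ^ 4 + X ^ 3 + X ^ 2 - X ^ 1 + 1, ?_, X ^ 33 + X ^ 30 - X ^ 29 - X ^ 26 - X ^ 25 - X ^ 23 + X ^ 22 + 2 * X ^ 21 + X ^ 20 + 2 * X ^ 19 - X ^ 17 - 2 * X ^ 16 - X ^ 15 - X ^ 14 + X ^ 13 + X ^ 12 +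 2 * X ^ 11 + X ^ 10 + X ^ 9 - X ^ 7 - X ^ 6 - X ^ 5 - X ^ 4 + X ^ 3 + X ^ 2 + 1, ?_⟩
  · intro i hi
    have hd : (X ^ 41 + X ^ 40 - X ^ 39 + X ^ 38 + X ^ 37 - X ^ 36 + X ^ 35 - X ^ 34 - X ^ 33 - X ^ 32 - X ^ 31 + X ^ 30 + X ^ 29 + X ^ 28 + X ^ 27 + X ^ 26 - X ^ 25 + X ^ 24 - X ^ 23 + X ^ 22 + X ^ 21 - X ^ 20 + X ^ 19 + X ^ 18 + X ^ 17 + X ^ 16 + X ^ 15 - X ^ 14 + X ^ 13 - X ^ 12 + X ^ 11 + X ^ 10 - X ^ 9 - X ^ 8 + X ^ 7 + X ^ 6 + X ^ 5 - X ^ 4 + X ^ 3 + X ^ 2 - X ^ 1 + 1 : Polynomial ℤ).natDegree ≤ 41 := by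
      compute_degree
    have hi := hi.trans hd
    clear hd
    simp only [coeff_add, coeff_sub, coeff_X_pow, coeff_one]
    interval_cases i <;> simp
  · ring

theorem factor_eq : ((X ^ 2 + X + 1) * (X ^ 3 - X + 1) ^ 2 : Polynomial ℤ) =
      X ^ 8 + X ^ 7 - X ^ 6 + X ^ 4 + X ^ 3 - X + 1 := by ring

/-- The Borwein polynomial
`P = (X^2 + X + 1)(X^3 - X + 1)^2 = X^8 + X^7 - X^6 + X^4 + X^3 - X + 1` divides
no Newman polynomial, but divides some Littlewood polynomial. -/
theorem borwein_square_factor_littlewood_not_newman :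
    ((X ^ 2 + X + 1) * (X ^ 3 - X + 1) ^ 2 : Polynomial ℤ) =
      X ^ 8 + X ^ 7 - X ^ 6 + X ^ 4 + X ^ 3 - X + 1 ∧
    IsBorwein (X ^ 8 + X ^ 7 - X ^ 6 + X ^ 4 + X ^ 3 - X + 1 : Polynomial ℤ) ∧
    (¬ ∃ N : Polynomial ℤ, IsNewman N ∧
      (X ^ 8 + X ^ 7 - X ^ 6 + X ^ 4 + X ^ 3 - X + 1 : Polynomial ℤ) ∣ N) ∧
    (∃ L : Polynomial ℤ, IsLittlewood L ∧
      (X ^ 8 + X ^ 7 - X ^ 6 + X ^ 4 + X ^ 3 - X + 1 : Polynomial ℤ) ∣ L) := by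
  refine ⟨factor_eq, ⟨?_, ?_⟩, ?_, littlewood_exists⟩
  · intro i
    simp only [coeff_add, coeff_sub, coeff_X_pow, coeff_one, coeff_X]
    by_cases hi : i ≤ 8
    · interval_cases i <;> simp
    · have : ∀ k ≤ 8, i ≠ k := by omega
      have h1 : ¬ (1 = i) := by omega
      simp [this, h1]
  · simp
  · rintro ⟨N, hN, hd⟩
    rw [← factor_eq] at hd
    exact no_newman_s15 N hN ((Dvd.intro_left _ rfl).trans hd)
end
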